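/- arXiv:2501.07090 — 2 statements merged into one kernel-verified Lean document; each statement's English description precedes it below -/
import Mathlib

section
/- There exists a convex pentagon that is an anisohedral tile: it admits a monohedral tiling of the plane, but it admits no monohedral tiling of the plane whose symmetry group acts transitively on the tiles (no isohedral tiling). -/
open EuclideanGeometry

noncomputable section

/-- The Euclidean plane. -/
abbrev Plane : Type := EuclideanSpace ℝ (Fin 2)

/-- A convex polygon with `n` vertices: `n` points of the plane in strictly convex
position, labeled in cyclic order (each segment joining cyclically consecutive
vertices lies on the boundary of the convex hull). -/
structure ConvexPolygon (n : ℕ) [NeZero n] where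
  V : Fin n → Plane
  strictlyConvex : ∀ i : Fin n, V i ∉ convexHull ℝ (V '' {j | j ≠ i})
  cyclic : ∀ i : Fin n, segment ℝ (V i) (V (i + 1)) ⊆ frontier (convexHull ℝ (Set.range V))

namespace ConvexPolygon

variable {n : ℕ} [NeZero n]

/-- The polygon, as a subset of the plane (the convex hull of its vertices). -/
def carrier (P : ConvexPolygon n) : Set Plane := convexHull ℝ (Set.range P.V)

/-- The interior angle (in radians) at the `i`-th vertex. -/
def angle (P : ConvexPolygon n) (i : Fin n) : ℝ :=
  EuclideanGeometry.angle (P.V (i - 1)) (P.V i) (P.V (i + 1))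

/-- The length of the side joining the `i`-th vertex to the next one. -/
def side (P : ConvexPolygon n) (i : Fin n) : ℝ := dist (P.V i) (P.V (i + 1))

end ConvexPolygon

/-- A convex pentagon.  Its angles `A, B, C, D, E` are `angle 0, …, angle 4` and
its sides `a, b, c, d, e` are `side 0, …, side 4`. -/
abbrev ConvexPentagon := ConvexPolygon 5

/-- `t` is an isometric copy of `P`. -/
def IsIsometricCopy (t P : Set Plane) : Prop :=
  ∃ g : Plane ≃ᵢ Plane, t = g '' P

/-- `T` is a monohedral tiling of the plane by isometric copies of `P`:
the tiles cover the plane and have pairwise disjoint interiors. -/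
def IsMonohedralTiling (P : Set Plane) (T : Set (Set Plane)) : Prop :=
  (∀ t ∈ T, IsIsometricCopy t P) ∧ ⋃₀ T = Set.univ ∧
    T.Pairwise fun t s => interior t ∩ interior s = ∅

/-- `x` is a vertex (extreme point) of the convex polygonal tile `t`. -/
def IsVertexOf (x : Plane) (t : Set Plane) : Prop := x ∈ Set.extremePoints ℝ t

/-- `e` is an edge (a full side) of the convex polygonal tile `t`: a segment
joining two distinct vertices of `t` that lies on the boundary of `t`. -/
def IsEdgeOf (e t : Set Plane) : Prop :=
  ∃ x y : Plane, x ≠ y ∧ IsVertexOf x t ∧ IsVertexOf y t ∧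
    e = segment ℝ x y ∧ e ⊆ frontier t

/-- A tiling by convex polygons is edge-to-edge if any two distinct tiles meet in
the empty set, a common vertex, or a common edge. -/
def IsEdgeToEdge (T : Set (Set Plane)) : Prop :=
  ∀ t ∈ T, ∀ s ∈ T, t ≠ s →
    t ∩ s = ∅ ∨
    (∃ x : Plane, t ∩ s = {x} ∧ IsVertexOf x t ∧ IsVertexOf x s) ∨
    (∃ e : Set Plane, t ∩ s = e ∧ IsEdgeOf e t ∧ IsEdgeOf e s)

/-- A tiling is periodic if translations by two linearly independent vectors map
every tile onto a tile. -/
def IsPeriodic (T : Set (Set Plane)) : Prop :=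
  ∃ u v : Plane, LinearIndependent ℝ ![u, v] ∧
    (∀ t ∈ T, (fun x => x + u) '' t ∈ T) ∧ (∀ t ∈ T, (fun x => x + v) '' t ∈ T)

/-- An isometry is a symmetry of the tiling `T` if it maps the tiles of `T` onto
the tiles of `T`. -/
def IsSymmetryOf (g : Plane ≃ᵢ Plane) (T : Set (Set Plane)) : Prop :=
  (fun t => g '' t) '' T = T

/-- A tiling is isohedral if its symmetry group acts transitively on the tiles. -/
def IsIsohedral (T : Set (Set Plane)) : Prop :=
  ∀ t ∈ T, ∀ s ∈ T, ∃ g : Plane ≃ᵢ Plane, IsSymmetryOf g T ∧ g '' t = s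

/-- Two tiles are equivalent if some symmetry of the tiling maps one onto the other. -/
def SymEquiv (T : Set (Set Plane)) (t s : Set Plane) : Prop :=
  ∃ g : Plane ≃ᵢ Plane, IsSymmetryOf g T ∧ g '' t = s

/-- A direct (orientation-preserving) isometry of the plane: an affine isometry
whose linear part has positive determinant. -/
def IsDirectIsometry (g : Plane ≃ᵢ Plane) : Prop :=
  ∃ (L : Plane ≃ₗᵢ[ℝ] Plane) (w : Plane),
    0 < LinearMap.det (L.toLinearEquiv : Plane →ₗ[ℝ] Plane) ∧ ∀ x, g x = L x + w

/-- Relabeling of the vertices of a pentagon: a cyclic shift by `k`, with the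
orientation reversed when `r = true`. -/
def relabel (k : Fin 5) (r : Bool) (i : Fin 5) : Fin 5 := if r then k - i else k + i

/-!
Measure the angle of a set at a point by the area of its intersection with small discs, so that
the angles of the tiles around any point of a tiling add up to `2 * π`. If the tile is asymmetric,
then each tile of an isohedral tiling is placed by a unique isometry `g`, and the set of
placements is closed under `a * b⁻¹ * c`. Hence around a point `x` all the points `g⁻¹ x` of the
tile occur equally often, and the sum of the angles of the tile over some set of its points, one
of which may be prescribed, is `2 * π / m` with a natural number `m`. The pentagon has the angles
`α - π / 3`, `2 * π / 3`, `2 * π / 3`, `2 * π - 2 * α` and `α` with `2 * π / 3 < α < 5 * π / 6`,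
and no sum of distinct ones among them including `α`, plus a multiple of `π`, is of that form.
Still, the pentagon and its mirror image in one side together form a fundamental domain for a
group of type `pgg`.
-/

open MeasureTheory Filter Topology Metric

lemma volume_image_isometryEquiv (g : Plane ≃ᵢ Plane) (S : Set Plane) :
    volume (g '' S) = volume S := by
  simpa only [EuclideanSpace.euclideanHausdorffMeasure_eq_volume] using
    g.isometry.euclideanHausdorffMeasure_image (d := 2) S

/-! ### Angles at a point -/

lemma volume_real_complex_sector (A : Set ℝ) (hA : MeasurableSet A) {r : ℝ} (hr : 0 ≤ r) :
    volume.real {z : ℂ | z.arg ∈ A ∧ ‖z‖ < r} =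
      volume.real (A ∩ Set.Ioc (-Real.pi) Real.pi) * (r ^ 2 / 2) := by
  set S := {z : ℂ | z.arg ∈ A ∧ ‖z‖ < r}
  have hS : MeasurableSet S :=
    (Complex.measurable_arg hA).inter (measurableSet_lt measurable_norm measurable_const)
  have hpolar : ∀ p ∈ polarCoord.target, p.1 • S.indicator (1 : ℂ → ℝ) (Complex.polarCoord.symm p) =
      (Set.Iio r).indicator id p.1 * A.indicator 1 p.2 := by
    rintro ⟨ρ, θ⟩ ⟨hρ, hθ⟩
    have harg : (Complex.polarCoord.symm (ρ, θ)).arg = θ := by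
      rw [Complex.polarCoord_symm_apply]
      exact_mod_cast Complex.arg_mul_cos_add_sin_mul_I hρ (Set.Ioo_subset_Ioc_self hθ)
    have hnorm : ‖Complex.polarCoord.symm (ρ, θ)‖ = ρ := by
      rw [Complex.norm_polarCoord_symm, abs_of_pos hρ]
    generalize Complex.polarCoord.symm (ρ, θ) = z at harg hnorm ⊢
    by_cases h₁ : θ ∈ A <;> by_cases h₂ : ρ < r <;> simp [S, harg, hnorm, h₁, h₂]
  have hradius : ∫ ρ in Set.Ioi (0 : ℝ), (Set.Iio r).indicator id ρ = r ^ 2 / 2 := by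
    rw [setIntegral_indicator measurableSet_Iio, Set.Ioi_inter_Iio, ← integral_Ioc_eq_integral_Ioo,
      ← intervalIntegral.integral_of_le hr]
    simp
  have hangle : ∫ θ in Set.Ioo (-Real.pi) Real.pi, A.indicator (1 : ℝ → ℝ) θ =
      volume.real (A ∩ Set.Ioc (-Real.pi) Real.pi) := by
    rw [← integral_Ioc_eq_integral_Ioo, setIntegral_indicator hA, Set.inter_comm]
    simp
  calc volume.real S = ∫ z, S.indicator (1 : ℂ → ℝ) z := (integral_indicator_one hS).symm
    _ = ∫ p in polarCoord.target, (Set.Iio r).indicator id p.1 * A.indicator 1 p.2 := by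
        rw [← Complex.integral_comp_polarCoord_symm]
        exact setIntegral_congr_fun polarCoord.open_target.measurableSet hpolar
    _ = volume.real (A ∩ Set.Ioc (-Real.pi) Real.pi) * (r ^ 2 / 2) := by
        rw [polarCoord_target, Measure.volume_eq_prod, setIntegral_prod_mul, hradius, hangle,
          mul_comm]

lemma volume_real_complex_sector_Icc {β r : ℝ} (hβ : β ∈ Set.Icc 0 Real.pi) (hr : 0 ≤ r) :
    volume.real {z : ℂ | z.arg ∈ Set.Icc 0 β ∧ ‖z‖ < r} = β / 2 * r ^ 2 := by
  have hsub : Set.Icc 0 β ⊆ Set.Ioc (-Real.pi) Real.pi :=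
    fun θ hθ ↦ ⟨by linarith [hθ.1, Real.pi_pos], hθ.2.trans hβ.2⟩
  rw [volume_real_complex_sector _ measurableSet_Icc hr, Set.inter_eq_left.2 hsub,
    Real.volume_real_Icc_of_le hβ.1]
  ring

lemma arg_mem_Icc_zero_pi_iff (z : ℂ) : z.arg ∈ Set.Icc 0 Real.pi ↔ 0 ≤ z.im := by
  rw [Set.mem_Icc, Complex.arg_nonneg_iff, and_iff_left z.arg_le_pi]

lemma arg_mem_Icc_zero_arg_iff {w : ℂ} (hw : 0 < w.im) (z : ℂ) :
    z.arg ∈ Set.Icc 0 w.arg ↔ 0 ≤ z.im ∧ 0 ≤ z.re * w.im - z.im * w.re := by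
  have hsin : z.re * w.im - z.im * w.re = ‖z‖ * ‖w‖ * Real.sin (w.arg - z.arg) := by
    rw [Real.sin_sub, ← Complex.norm_mul_cos_arg z, ← Complex.norm_mul_sin_arg z,
      ← Complex.norm_mul_cos_arg w, ← Complex.norm_mul_sin_arg w]
    ring
  rw [Set.mem_Icc, Complex.arg_nonneg_iff, hsin]
  refine and_congr_right fun hz ↦ ⟨fun hle ↦ ?_, fun hnonneg ↦ ?_⟩
  · have hpos := Complex.arg_nonneg_iff.2 hz
    exact mul_nonneg (by positivity) (Real.sin_nonneg_of_nonneg_of_le_pi (sub_nonneg.2 hle)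
      (by linarith [w.arg_le_pi]))
  · by_contra! hlt
    have hz0 : z ≠ 0 := by
      rintro rfl
      rw [Complex.arg_zero] at hlt
      exact hlt.not_ge (Complex.arg_nonneg_iff.2 hw.le)
    have hw0 : w ≠ 0 := by
      rintro rfl
      exact hw.ne' Complex.zero_im
    have hwpos : 0 < w.arg := (Complex.arg_nonneg_iff.2 hw.le).lt_of_ne' fun h ↦
      hw.ne' (Complex.arg_eq_zero_iff.1 h).2
    have hneg : Real.sin (w.arg - z.arg) < 0 :=
      Real.sin_neg_of_neg_of_neg_pi_lt (by linarith) (by linarith [z.arg_le_pi])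
    exact hnonneg.not_gt (mul_neg_of_pos_of_neg (by positivity) hneg)

lemma exists_linearIsometryEquiv_complex (u w : Plane) :
    ∃ φ : Plane ≃ₗᵢ[ℝ] ℂ, φ u = ‖u‖ ∧ 0 ≤ (φ w).im := by
  obtain ⟨ψ, hψ⟩ : ∃ ψ : Plane ≃ₗᵢ[ℝ] ℂ, ψ u = ‖u‖ := by
    let ι : Plane ≃ₗᵢ[ℝ] ℂ := Complex.orthonormalBasisOneI.repr.symm
    refine ⟨ι.trans (rotation (Circle.exp (-(ι u).arg))), ?_⟩
    rw [LinearIsometryEquiv.trans_apply, rotation_apply, Circle.coe_exp]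
    nth_rw 2 [← Complex.norm_mul_exp_arg_mul_I (ι u)]
    rw [mul_left_comm, ← Complex.exp_add, LinearIsometryEquiv.norm_map]
    simp
  rcases le_total 0 (ψ w).im with h | h
  · exact ⟨ψ, hψ, h⟩
  · exact ⟨ψ.trans Complex.conjLIE, by simp [hψ], by simpa using h⟩

lemma linearMap_apply_eq_re_add_im (φ : Plane ≃ₗᵢ[ℝ] ℂ) (f : Plane →ₗ[ℝ] ℝ) (z : Plane) :
    f z = (φ z).re * f (φ.symm 1) + (φ z).im * f (φ.symm Complex.I) := by
  have hz : z = (φ z).re • φ.symm 1 + (φ z).im • φ.symm Complex.I := by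
    rw [← map_smul, ← map_smul, ← map_add, LinearIsometryEquiv.eq_symm_apply]
    simp
  nth_rw 1 [hz]
  simp

lemma linearMap_nonneg_iff_im_nonneg {φ : Plane ≃ₗᵢ[ℝ] ℂ} {f : Plane →ₗ[ℝ] ℝ} {u w : Plane}
    (hu : u ≠ 0) (hφu : φ u = ‖u‖) (hfu : f u = 0) (hφw : 0 ≤ (φ w).im) (hfw : 0 < f w) :
    0 < (φ w).im ∧ ∀ z, 0 ≤ f z ↔ 0 ≤ (φ z).im := by
  have hf_one : f (φ.symm 1) = 0 := by
    rw [linearMap_apply_eq_re_add_im φ, hφu] at hfu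
    simpa [hu] using hfu
  have hf (z : Plane) : f z = (φ z).im * f (φ.symm Complex.I) := by
    rw [linearMap_apply_eq_re_add_im φ f z, hf_one, mul_zero, zero_add]
  rw [hf w] at hfw
  have hI : 0 < f (φ.symm Complex.I) := pos_of_mul_pos_right hfw hφw
  exact ⟨pos_of_mul_pos_left hfw hI.le, fun z ↦ by rw [hf z, mul_nonneg_iff_of_pos_right hI]⟩

/-- The set `S` has angle `θ` at the point `x`: all sufficiently small discs centred at `x` meet `S`
in the area of a sector of angle `θ`. -/
def HasAngleAt (S : Set Plane) (x : Plane) (θ : ℝ) : Prop :=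
  ∀ᶠ r in 𝓝[>] (0 : ℝ), volume.real (S ∩ ball x r) = θ / 2 * r ^ 2

namespace HasAngleAt

variable {S S' : Set Plane} {x : Plane} {θ θ' : ℝ}

lemma unique (h : HasAngleAt S x θ) (h' : HasAngleAt S x θ') : θ = θ' := by
  obtain ⟨r, hr, hr', hpos⟩ := (h.and (h'.and self_mem_nhdsWithin)).exists
  have hr2 : (0 : ℝ) < r ^ 2 := pow_pos hpos 2
  linarith [mul_right_cancel₀ hr2.ne' (hr.symm.trans hr')]

lemma congr (h : HasAngleAt S x θ) (hS : ∀ᶠ z in 𝓝 x, z ∈ S ↔ z ∈ S') : HasAngleAt S' x θ := by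
  obtain ⟨ε, hε, hball⟩ := Metric.eventually_nhds_iff_ball.1 hS
  filter_upwards [h, Ioo_mem_nhdsGT hε] with r hr hrε
  have hinter : S' ∩ ball x r = S ∩ ball x r := by
    ext z
    exact and_congr_left fun hz ↦ (hball z (ball_subset_ball hrε.2.le hz)).symm
  rw [hinter, hr]

lemma image (h : HasAngleAt S x θ) (g : Plane ≃ᵢ Plane) : HasAngleAt (g '' S) (g x) θ := by
  filter_upwards [h] with r hr
  rw [← hr, ← g.image_ball, ← Set.image_inter g.injective, measureReal_def, measureReal_def,
    volume_image_isometryEquiv]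

lemma univ (x : Plane) : HasAngleAt Set.univ x (2 * Real.pi) := by
  filter_upwards [self_mem_nhdsWithin] with r hr
  rw [Set.univ_inter, measureReal_def, EuclideanSpace.volume_ball_fin_two]
  simp only [ENNReal.toReal_mul, ENNReal.toReal_pow, ENNReal.toReal_ofReal (Set.mem_Ioi.1 hr).le,
    ENNReal.toReal_ofReal Real.pi_nonneg]
  ring

lemma biUnion {ι : Type*} {s : Finset ι} {A : ι → Set Plane} {α : ι → ℝ}
    (hA : ∀ i ∈ s, HasAngleAt (A i) x (α i)) (hmeas : ∀ i ∈ s, NullMeasurableSet (A i))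
    (hdisj : (s : Set ι).Pairwise (Function.onFun (AEDisjoint volume) A)) :
    HasAngleAt (⋃ i ∈ s, A i) x (∑ i ∈ s, α i) := by
  filter_upwards [(eventually_all_finset s).2 hA] with r hr
  rw [Set.iUnion₂_inter, measureReal_biUnion_finset₀
      (hdisj.mono' fun _ _ hij ↦ hij.mono Set.inter_subset_left Set.inter_subset_left)
      (fun i hi ↦ (hmeas i hi).inter measurableSet_ball.nullMeasurableSet)
      (fun i _ ↦ measure_ne_top_of_subset Set.inter_subset_right measure_ball_lt_top.ne),
    Finset.sum_congr rfl hr, Finset.sum_div, Finset.sum_mul]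

lemma of_arg_mem_Icc (φ : Plane ≃ₗᵢ[ℝ] ℂ) (hθ : θ ∈ Set.Icc 0 Real.pi)
    (hS : ∀ z, z ∈ S ↔ (φ z).arg ∈ Set.Icc 0 θ) : HasAngleAt S 0 θ := by
  filter_upwards [self_mem_nhdsWithin] with r hr
  have hpre : S ∩ ball 0 r = φ ⁻¹' {z | z.arg ∈ Set.Icc 0 θ ∧ ‖z‖ < r} := by
    ext z
    simp [hS]
  rw [hpre, measureReal_def, φ.measurePreserving.measure_preimage_emb
      φ.toHomeomorph.measurableEmbedding, ← measureReal_def,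
    volume_real_complex_sector_Icc hθ (Set.mem_Ioi.1 hr).le]

lemma halfPlane {f : Plane →ₗ[ℝ] ℝ} (hf : f ≠ 0) : HasAngleAt {z | 0 ≤ f z} 0 Real.pi := by
  obtain ⟨u, hfu, hu⟩ : ∃ u ∈ LinearMap.ker f, u ≠ 0 :=
    Submodule.exists_mem_ne_zero_of_ne_bot (LinearMap.ker_ne_bot_of_finrank_lt (by simp))
  obtain ⟨w, hw⟩ : ∃ w, 0 < f w := by
    obtain ⟨w, hw⟩ := DFunLike.ne_iff.1 hf
    rcases lt_or_gt_of_ne hw with h | h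
    · exact ⟨-w, by simpa using h⟩
    · exact ⟨w, h⟩
  obtain ⟨φ, hφu, hφw⟩ := exists_linearIsometryEquiv_complex u w
  refine of_arg_mem_Icc φ ⟨Real.pi_nonneg, le_rfl⟩ fun z ↦ ?_
  rw [arg_mem_Icc_zero_pi_iff]
  exact (linearMap_nonneg_iff_im_nonneg hu hφu hfu hφw hw).2 z

lemma wedge {f g : Plane →ₗ[ℝ] ℝ} {u w : Plane} (hfu : f u = 0) (hfw : 0 < f w) (hgw : g w = 0)
    (hgu : 0 < g u) :
    HasAngleAt {z | 0 ≤ f z ∧ 0 ≤ g z} 0 (InnerProductGeometry.angle u w) := by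
  have hu : u ≠ 0 := by
    rintro rfl
    exact hgu.ne' (map_zero g)
  obtain ⟨φ, hφu, hφw⟩ := exists_linearIsometryEquiv_complex u w
  obtain ⟨hw, hf⟩ := linearMap_nonneg_iff_im_nonneg hu hφu hfu hφw hfw
  have hangle : InnerProductGeometry.angle u w = (φ w).arg := by
    rw [← φ.toLinearIsometry.angle_map u w]
    simp only [LinearIsometryEquiv.coe_toLinearIsometry, hφu]
    rw [← mul_one (‖u‖ : ℂ), ← Complex.real_smul,
      InnerProductGeometry.angle_smul_left_of_pos _ _ (norm_pos_iff.2 hu),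
      Complex.angle_one_left (fun h ↦ hw.ne' (by rw [h, Complex.zero_im])),
      abs_of_nonneg (Complex.arg_nonneg_iff.2 hw.le)]
  have hg_one : 0 < g (φ.symm 1) := by
    rw [linearMap_apply_eq_re_add_im φ, hφu] at hgu
    simpa [hu] using hgu
  have hg (z : Plane) : g z * (φ w).im =
      g (φ.symm 1) * ((φ z).re * (φ w).im - (φ z).im * (φ w).re) := by
    rw [linearMap_apply_eq_re_add_im φ] at hgw ⊢
    linear_combination (φ z).im * hgw
  rw [hangle]
  refine of_arg_mem_Icc φ (arg_mem_Icc_zero_pi_iff _ |>.2 hw.le) fun z ↦ ?_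
  rw [Set.mem_ofPred_eq, arg_mem_Icc_zero_arg_iff hw, hf,
    ← mul_nonneg_iff_of_pos_right hw (b := g z), hg, mul_nonneg_iff_of_pos_left hg_one]

lemma translate (h : HasAngleAt S 0 θ) (x : Plane) : HasAngleAt {z | z - x ∈ S} x θ := by
  have himage := h.image (IsometryEquiv.addRight x)
  simpa [Set.image_add_right, Set.preimage, sub_eq_add_neg] using himage

end HasAngleAt

/-! ### Polygons given by equations of their sides -/

/-- The affine functions `s i` are equations of the sides of the polygon with vertices `V i`: the
polygon is the intersection of the half-planes `0 ≤ s i`, and the `i`-th side, from `V i` to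
`V (i + 1)`, lies on the line `s i = 0`. -/
structure IsSideSystem {n : ℕ} [NeZero n] (V : Fin n → Plane) (s : Fin n → Plane →ᵃ[ℝ] ℝ) :
    Prop where
  three_le : 3 ≤ n
  nonneg : ∀ i j, 0 ≤ s i (V j)
  eq_zero_iff : ∀ i j, s i (V j) = 0 ↔ j = i ∨ j = i + 1
  mem_convexHull : ∀ z, (∀ i, 0 ≤ s i z) → z ∈ convexHull ℝ (Set.range V)

namespace IsSideSystem

variable {n : ℕ} [NeZero n] {V : Fin n → Plane} {s : Fin n → Plane →ᵃ[ℝ] ℝ}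

lemma fin_one_ne_zero (h : IsSideSystem V s) : (1 : Fin n) ≠ 0 := by
  have hn : 1 % n = 1 := Nat.mod_eq_of_lt (by linarith [h.three_le])
  simp [Fin.ext_iff, hn]

lemma fin_two_ne_zero (h : IsSideSystem V s) : (1 + 1 : Fin n) ≠ 0 := by
  have hn : 1 % n = 1 := Nat.mod_eq_of_lt (by linarith [h.three_le])
  have hn' : 2 % n = 2 := Nat.mod_eq_of_lt (by linarith [h.three_le])
  simp [Fin.ext_iff, Fin.val_add, hn, hn']

lemma add_one_ne (h : IsSideSystem V s) (i : Fin n) : i + 1 ≠ i := by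
  simpa using h.fin_one_ne_zero

lemma sub_one_ne (h : IsSideSystem V s) (i : Fin n) : i - 1 ≠ i := by
  simpa using h.fin_one_ne_zero

lemma sub_one_ne_add_one (h : IsSideSystem V s) (i : Fin n) : i - 1 ≠ i + 1 := by
  rw [Ne, sub_eq_iff_eq_add, add_assoc, left_eq_add]
  exact h.fin_two_ne_zero

lemma pos_iff (h : IsSideSystem V s) (i j : Fin n) : 0 < s i (V j) ↔ j ≠ i ∧ j ≠ i + 1 := by
  rw [(h.nonneg i j).lt_iff_ne', ne_eq, h.eq_zero_iff, not_or]

lemma mem_convexHull_iff (h : IsSideSystem V s) {z : Plane} :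
    z ∈ convexHull ℝ (Set.range V) ↔ ∀ i, 0 ≤ s i z := by
  refine ⟨fun hz i ↦ ?_, h.mem_convexHull z⟩
  have hsub : convexHull ℝ (Set.range V) ⊆ s i ⁻¹' Set.Ici 0 :=
    convexHull_min (Set.range_subset_iff.2 (h.nonneg i)) ((convex_Ici (0 : ℝ)).affine_preimage _)
  exact hsub hz

lemma linear_ne_zero (h : IsSideSystem V s) (i : Fin n) : (s i).linear ≠ 0 := by
  intro hzero
  have hpos := (h.pos_iff i (i - 1)).2 ⟨h.sub_one_ne i, h.sub_one_ne_add_one i⟩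
  have hsub := (s i).linearMap_vsub (V (i - 1)) (V i)
  rw [hzero, (h.eq_zero_iff i i).2 (Or.inl rfl)] at hsub
  simp [hpos.ne] at hsub

lemma pos_of_mem_interior (h : IsSideSystem V s) {z : Plane}
    (hz : z ∈ interior (convexHull ℝ (Set.range V))) (i : Fin n) : 0 < s i z := by
  have hopen : IsOpenMap (s i) := (s i).isOpenMap_linear_iff.1
    ((s i).linear.isOpenMap_of_finiteDimensional
      (LinearMap.surjective_of_ne_zero (h.linear_ne_zero i)))
  have hsub : convexHull ℝ (Set.range V) ⊆ s i ⁻¹' Set.Ici 0 :=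
    fun x hx ↦ h.mem_convexHull_iff.1 hx i
  have := hopen.interior_preimage_subset_preimage_interior (interior_mono hsub hz)
  rwa [interior_Ici] at this

/-- The convex polygon whose sides are given by a side system. -/
def toConvexPolygon (h : IsSideSystem V s) : ConvexPolygon n where
  V := V
  strictlyConvex i hi := by
    -- `V i` is the only vertex at which the sum of the two adjacent side equations vanishes.
    have hsub : convexHull ℝ (V '' {j | j ≠ i}) ⊆ (s (i - 1) + s i) ⁻¹' Set.Ioi 0 := by
      refine convexHull_min ?_ ((convex_Ioi (0 : ℝ)).affine_preimage _)
      rintro _ ⟨j, hj, rfl⟩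
      by_cases hj' : j = i + 1
      · refine add_pos_of_pos_of_nonneg ((h.pos_iff _ _).2 ⟨?_, ?_⟩) (h.nonneg _ _)
        · exact hj' ▸ (h.sub_one_ne_add_one i).symm
        · simpa using hj
      · exact add_pos_of_nonneg_of_pos (h.nonneg _ _) ((h.pos_iff _ _).2 ⟨hj, hj'⟩)
    have hpos : 0 < s (i - 1) (V i) + s i (V i) := hsub hi
    rw [(h.eq_zero_iff i i).2 (Or.inl rfl), (h.eq_zero_iff (i - 1) i).2 (by simp)] at hpos
    simp at hpos
  cyclic i z hz := by
    have hzero : s i z = 0 := by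
      have hsub : segment ℝ (V i) (V (i + 1)) ⊆ s i ⁻¹' {0} :=
        ((convex_singleton (0 : ℝ)).affine_preimage (s i)).segment_subset
          ((h.eq_zero_iff i i).2 (Or.inl rfl)) ((h.eq_zero_iff i (i + 1)).2 (Or.inr rfl))
      exact hsub hz
    refine ⟨subset_closure (segment_subset_convexHull
      (Set.mem_range_self i) (Set.mem_range_self (i + 1)) hz), fun hint ↦ ?_⟩
    exact (h.pos_of_mem_interior hint i).ne' hzero

lemma mem_carrier_iff (h : IsSideSystem V s) {z : Plane} :
    z ∈ h.toConvexPolygon.carrier ↔ ∀ i, 0 ≤ s i z :=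
  h.mem_convexHull_iff

lemma eq_of_mem_two_sides (h : IsSideSystem V s) {i j k l : Fin n} (hij : i ≠ j)
    (hki : s i (V k) = 0) (hkj : s j (V k) = 0) (hli : s i (V l) = 0) (hlj : s j (V l) = 0) :
    l = k := by
  have hne (m : Fin n) : m ≠ m + 1 + 1 := by
    simpa [add_assoc] using h.fin_two_ne_zero
  rw [h.eq_zero_iff] at hki hkj hli hlj
  grind

lemma exists_eq_vertex_of_eq_zero (h : IsSideSystem V s) {z : Plane} {i j : Fin n} (hij : i ≠ j)
    (hz : z ∈ h.toConvexPolygon.carrier) (hi : s i z = 0) (hj : s j z = 0) : ∃ k, z = V k := by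
  obtain ⟨t, w, hw, hw1, rfl⟩ := (convexHull_range_eq_exists_affineCombination V).subset hz
  have hside {m : Fin n} (hm : s m (t.affineCombination ℝ V w) = 0) {k : Fin n} (hk : k ∈ t)
      (hwk : w k ≠ 0) : s m (V k) = 0 := by
    rw [Finset.map_affineCombination _ _ _ hw1,
      Finset.affineCombination_eq_linear_combination _ _ _ hw1,
      Finset.sum_eq_zero_iff_of_nonneg (by exact fun k hk ↦ smul_nonneg (hw k hk) (h.nonneg m k))]
      at hm
    exact (smul_eq_zero.1 (hm k hk)).resolve_left hwk
  obtain ⟨k, hk, hwk⟩ : ∃ k ∈ t, w k ≠ 0 :=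
    Finset.exists_ne_zero_of_sum_ne_zero (hw1.trans_ne one_ne_zero)
  have honly (l : Fin n) (hl : l ∈ t) (hlk : l ≠ k) : w l = 0 := by
    by_contra hwl
    exact hlk (h.eq_of_mem_two_sides hij (hside hi hk hwk) (hside hj hk hwk) (hside hi hl hwl)
      (hside hj hl hwl))
  have hwk1 : w k = 1 := by rw [← hw1, Finset.sum_eq_single_of_mem k hk honly]
  exact ⟨k, t.affineCombination_of_eq_one_of_eq_zero _ _ hk hwk1 honly⟩

lemma eventually_mem_carrier_iff (h : IsSideSystem V s) {x : Plane}
    (hx : x ∈ h.toConvexPolygon.carrier) :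
    ∀ᶠ z in 𝓝 x, (∀ i, s i x = 0 → 0 ≤ (s i).linear (z - x)) ↔ z ∈ h.toConvexPolygon.carrier := by
  have hinactive : ∀ᶠ z in 𝓝 x, ∀ i, s i x ≠ 0 → 0 < s i z := by
    refine eventually_all.2 fun i ↦ ?_
    by_cases hi : s i x = 0
    · exact Eventually.of_forall fun z hne ↦ absurd hi hne
    · have hpos := (h.mem_carrier_iff.1 hx i).lt_of_ne' hi
      have hcont : Continuous (s i) := (s i).continuous_of_finiteDimensional
      filter_upwards [hcont.continuousAt.eventually (lt_mem_nhds hpos)] with z hz _ using hz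
  filter_upwards [hinactive] with z hz
  rw [h.mem_carrier_iff]
  refine forall_congr' fun i ↦ ?_
  by_cases hi : s i x = 0
  · have hsub := (s i).linearMap_vsub z x
    rw [hi, vsub_eq_sub, vsub_eq_sub, sub_zero] at hsub
    simp only [hi, hsub, forall_const]
  · simp [hi, (hz i hi).le]

lemma hasAngleAt_vertex (h : IsSideSystem V s) (i : Fin n) :
    HasAngleAt h.toConvexPolygon.carrier (V i) (h.toConvexPolygon.angle i) := by
  have hi : s i (V i) = 0 := (h.eq_zero_iff _ _).2 (Or.inl rfl)
  have hi' : s (i - 1) (V i) = 0 := (h.eq_zero_iff _ _).2 (by simp)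
  have hlinear {j : Fin n} (hj : s j (V i) = 0) (k : Fin n) :
      (s j).linear (V k - V i) = s j (V k) := by
    simpa [hj] using (s j).linearMap_vsub (V k) (V i)
  have hwedge : HasAngleAt {z | 0 ≤ (s i).linear z ∧ 0 ≤ (s (i - 1)).linear z} 0
      (h.toConvexPolygon.angle i) := by
    rw [ConvexPolygon.angle, EuclideanGeometry.angle_comm]
    refine HasAngleAt.wedge (u := V (i + 1) - V i) (w := V (i - 1) - V i) ?_ ?_ ?_ ?_
    · rw [hlinear hi, h.eq_zero_iff]
      exact Or.inr rfl
    · rw [hlinear hi, h.pos_iff]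
      exact ⟨h.sub_one_ne i, h.sub_one_ne_add_one i⟩
    · rw [hlinear hi', h.eq_zero_iff]
      exact Or.inl rfl
    · rw [hlinear hi', h.pos_iff, sub_add_cancel]
      exact ⟨(h.sub_one_ne_add_one i).symm, h.add_one_ne i⟩
  refine (hwedge.translate (V i)).congr ?_
  filter_upwards [h.eventually_mem_carrier_iff (subset_convexHull ℝ _ (Set.mem_range_self i))]
    with z hz
  rw [← hz]
  refine ⟨fun hz j hj ↦ ?_, fun hz ↦ ⟨hz i hi, hz (i - 1) hi'⟩⟩
  rcases (h.eq_zero_iff _ _).1 hj with rfl | rfl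
  · exact hz.1
  · simpa using hz.2

lemma hasAngleAt_pi (h : IsSideSystem V s) {z : Plane} (hz : z ∈ h.toConvexPolygon.carrier)
    {i : Fin n} (hi : s i z = 0) (hunique : ∀ j, s j z = 0 → j = i) :
    HasAngleAt h.toConvexPolygon.carrier z Real.pi := by
  refine ((HasAngleAt.halfPlane (h.linear_ne_zero i)).translate z).congr ?_
  filter_upwards [h.eventually_mem_carrier_iff hz] with x hx
  rw [← hx]
  exact ⟨fun hpos j hj ↦ hunique j hj ▸ hpos, fun hpos ↦ hpos i hi⟩

lemma hasAngleAt_two_pi (h : IsSideSystem V s) {z : Plane}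
    (hz : z ∈ h.toConvexPolygon.carrier) (hne : ∀ i, s i z ≠ 0) :
    HasAngleAt h.toConvexPolygon.carrier z (2 * Real.pi) := by
  refine (HasAngleAt.univ z).congr ?_
  filter_upwards [h.eventually_mem_carrier_iff hz] with x hx
  simp [← hx, hne]

lemma exists_hasAngleAt (h : IsSideSystem V s) {z : Plane}
    (hz : z ∈ h.toConvexPolygon.carrier) :
    ∃ θ, HasAngleAt h.toConvexPolygon.carrier z θ ∧
      ((∃ i, z = V i ∧ θ = h.toConvexPolygon.angle i) ∨
        ((∀ i, z ≠ V i) ∧ (θ = Real.pi ∨ θ = 2 * Real.pi))) := by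
  by_cases hV : ∃ i, z = V i
  · obtain ⟨i, rfl⟩ := hV
    exact ⟨_, h.hasAngleAt_vertex i, Or.inl ⟨i, rfl, rfl⟩⟩
  by_cases hs : ∃ i, s i z = 0
  · obtain ⟨i, hi⟩ := hs
    have hunique (j : Fin n) (hj : s j z = 0) : j = i := by
      by_contra hji
      exact hV (h.exists_eq_vertex_of_eq_zero hji hz hj hi)
    exact ⟨_, h.hasAngleAt_pi hz hi hunique, Or.inr ⟨not_exists.1 hV, Or.inl rfl⟩⟩
  · exact ⟨_, h.hasAngleAt_two_pi hz (not_exists.1 hs), Or.inr ⟨not_exists.1 hV, Or.inr rfl⟩⟩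

lemma vertex_injective (h : IsSideSystem V s) : Function.Injective V := fun i j hij ↦ by
  have hj : s j (V j) = 0 := (h.eq_zero_iff _ _).2 (Or.inl rfl)
  have hj' : s (j - 1) (V j) = 0 := (h.eq_zero_iff _ _).2 (by simp)
  exact h.eq_of_mem_two_sides (h.sub_one_ne j) hj' hj (hij ▸ hj') (hij ▸ hj)

lemma exists_eq_vertex_of_hasAngleAt (h : IsSideSystem V s) {z : Plane} {θ : ℝ}
    (hz : z ∈ h.toConvexPolygon.carrier) (hθ : HasAngleAt h.toConvexPolygon.carrier z θ)
    (hπ : θ < Real.pi) : ∃ i, z = V i ∧ θ = h.toConvexPolygon.angle i := by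
  obtain ⟨θ', hθ', hcases⟩ := h.exists_hasAngleAt hz
  obtain rfl := hθ.unique hθ'
  refine hcases.resolve_right ?_
  rintro ⟨-, rfl | rfl⟩ <;> linarith [Real.pi_pos]

lemma exists_sum_angle_eq [DecidableEq Plane] (h : IsSideSystem V s) {X : Finset Plane}
    {θ : Plane → ℝ} (hX : ↑X ⊆ h.toConvexPolygon.carrier)
    (hθ : ∀ x ∈ h.toConvexPolygon.carrier, HasAngleAt h.toConvexPolygon.carrier x (θ x)) :
    ∃ k : ℕ, ∑ x ∈ X, θ x =
      ∑ i with V i ∈ X, h.toConvexPolygon.angle i + k * Real.pi := by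
  classical
  have hvertex : ∑ x ∈ X with x ∈ Set.range V, θ x =
      ∑ i with V i ∈ X, h.toConvexPolygon.angle i := by
    have himage : X.filter (· ∈ Set.range V) = (Finset.univ.filter (V · ∈ X)).image V := by
      ext x
      simp only [Finset.mem_filter, Finset.mem_image, Finset.mem_univ, true_and, Set.mem_range]
      grind
    rw [himage, Finset.sum_image h.vertex_injective.injOn]
    exact Finset.sum_congr rfl fun i hi ↦
      (hθ _ (hX (Finset.mem_filter.1 hi).2)).unique (h.hasAngleAt_vertex i)
  have hother : ∃ k : ℕ, ∑ x ∈ X with x ∉ Set.range V, θ x = k * Real.pi := by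
    refine Finset.sum_induction _ (fun r ↦ ∃ k : ℕ, r = k * Real.pi) ?_ ⟨0, by simp⟩
      fun x hx ↦ ?_
    · rintro _ _ ⟨k, rfl⟩ ⟨l, rfl⟩
      exact ⟨k + l, by push_cast; ring⟩
    · obtain ⟨hxX, hxV⟩ := Finset.mem_filter.1 hx
      obtain ⟨θ', hθ', ⟨i, rfl, -⟩ | ⟨-, rfl | rfl⟩⟩ := h.exists_hasAngleAt (hX hxX)
      · exact absurd (Set.mem_range_self i) hxV
      · exact ⟨1, by simpa using (hθ x (hX hxX)).unique hθ'⟩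
      · exact ⟨2, by simpa using (hθ x (hX hxX)).unique hθ'⟩
  obtain ⟨k, hk⟩ := hother
  exact ⟨k, by rw [← Finset.sum_filter_add_sum_filter_not X (· ∈ Set.range V), hvertex, hk]⟩

end IsSideSystem

/-! ### Isohedral tilings by asymmetric tiles -/

lemma HasAngleAt.volume_ne_zero {S : Set Plane} {x : Plane} {θ : ℝ} (h : HasAngleAt S x θ)
    (hθ : θ ≠ 0) : volume S ≠ 0 := by
  intro hS
  obtain ⟨r, hr, hpos⟩ := (h.and self_mem_nhdsWithin).exists
  rw [measureReal_def, measure_mono_null Set.inter_subset_left hS, ENNReal.toReal_zero] at hr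
  have hr2 : (0 : ℝ) < r ^ 2 := pow_pos hpos 2
  exact hθ (by simpa [hr2.ne'] using hr.symm)

namespace IsMonohedralTiling

variable {P : Set Plane} {T : Set (Set Plane)}

lemma isCompact_tile (hT : IsMonohedralTiling P T) (hP : IsCompact P) {t : Set Plane}
    (ht : t ∈ T) : IsCompact t := by
  obtain ⟨g, rfl⟩ := hT.1 t ht
  exact hP.image g.continuous

lemma volume_tile (hT : IsMonohedralTiling P T) {t : Set Plane} (ht : t ∈ T) :
    volume t = volume P := by
  obtain ⟨g, rfl⟩ := hT.1 t ht
  exact volume_image_isometryEquiv g P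

lemma volume_frontier_tile (hT : IsMonohedralTiling P T) (hfr : volume (frontier P) = 0)
    {t : Set Plane} (ht : t ∈ T) : volume (frontier t) = 0 := by
  obtain ⟨g, rfl⟩ := hT.1 t ht
  rw [← IsometryEquiv.coe_toHomeomorph, ← g.toHomeomorph.image_frontier]
  exact (volume_image_isometryEquiv g _).trans hfr

lemma aedisjoint (hT : IsMonohedralTiling P T) (hfr : volume (frontier P) = 0) :
    T.Pairwise (AEDisjoint volume) := by
  intro t ht s hs hts
  refine measure_mono_null (t := frontier t ∪ frontier s) ?_
    (measure_union_null (hT.volume_frontier_tile hfr ht) (hT.volume_frontier_tile hfr hs))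
  rintro z ⟨hzt, hzs⟩
  by_contra hz
  rw [Set.mem_union, not_or] at hz
  have hmem : z ∈ interior t ∩ interior s :=
    ⟨by_contra fun h ↦ hz.1 ⟨subset_closure hzt, h⟩, by_contra fun h ↦ hz.2 ⟨subset_closure hzs, h⟩⟩
  simp [hT.2.2 ht hs hts] at hmem

lemma finite_inter_ball (hT : IsMonohedralTiling P T) (hP : IsCompact P)
    (hfr : volume (frontier P) = 0) (hvol : volume P ≠ 0) (x : Plane) :
    {t ∈ T | (t ∩ ball x 1).Nonempty}.Finite := by
  set N := {t ∈ T | (t ∩ ball x 1).Nonempty}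
  have hsub : ⋃ t : N, (t : Set Plane) ⊆ ball x (diam P + 1) := by
    refine Set.iUnion_subset fun ⟨t, ht, w, hwt, hwx⟩ z hz ↦ ?_
    obtain ⟨g, rfl⟩ := hT.1 t ht
    have hdiam := dist_le_diam_of_mem (hT.isCompact_tile hP ht).isBounded hz hwt
    rw [g.isometry.diam_image] at hdiam
    exact (dist_triangle z w x).trans_lt (add_lt_add_of_le_of_lt hdiam hwx)
  have hfin := Measure.finite_const_le_meas_of_disjoint_iUnion₀ volume (pos_iff_ne_zero.2 hvol)
    (As := fun t : N ↦ (t : Set Plane))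
    (fun t ↦ (hT.isCompact_tile hP t.2.1).measurableSet.nullMeasurableSet)
    (fun t s hts ↦ hT.aedisjoint hfr t.2.1 s.2.1 (Subtype.coe_injective.ne hts))
    (measure_ne_top_of_subset hsub measure_ball_lt_top.ne)
  have huniv : {t : N | volume P ≤ volume (t : Set Plane)} = Set.univ :=
    Set.eq_univ_of_forall fun t ↦ (hT.volume_tile t.2.1).ge
  rw [huniv, Set.finite_univ_iff] at hfin
  exact Set.toFinite N

lemma finite_tiles_at (hT : IsMonohedralTiling P T) (hP : IsCompact P)
    (hfr : volume (frontier P) = 0) (hvol : volume P ≠ 0) (x : Plane) :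
    {t ∈ T | x ∈ t}.Finite :=
  (hT.finite_inter_ball hP hfr hvol x).subset fun _ ht ↦ ⟨ht.1, x, ht.2, mem_ball_self one_pos⟩

lemma eventually_exists_tile (hT : IsMonohedralTiling P T) (hP : IsCompact P)
    (hfr : volume (frontier P) = 0) (hvol : volume P ≠ 0) (x : Plane) :
    ∀ᶠ z in 𝓝 x, ∃ t ∈ T, x ∈ t ∧ z ∈ t := by
  have hmiss : ∀ᶠ z in 𝓝 x, ∀ t ∈ {t ∈ T | (t ∩ ball x 1).Nonempty}, x ∉ t → z ∉ t := by
    refine (eventually_all_finite (hT.finite_inter_ball hP hfr hvol x)).2 fun t ht ↦ ?_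
    by_cases hx : x ∈ t
    · exact Eventually.of_forall fun z h ↦ absurd hx h
    · filter_upwards [(hT.isCompact_tile hP ht.1).isClosed.isOpen_compl.mem_nhds hx] with z hz _
        using hz
  filter_upwards [hmiss, ball_mem_nhds x one_pos] with z hz hzx
  obtain ⟨t, ht, hzt⟩ := Set.mem_sUnion.1 (hT.2.1.ge (Set.mem_univ z))
  exact ⟨t, ht, by_contra fun hx ↦ hz t ⟨ht, z, hzt, hzx⟩ hx hzt, hzt⟩

lemma sum_angle_eq_two_pi (hT : IsMonohedralTiling P T) (hP : IsCompact P)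
    (hfr : volume (frontier P) = 0) (hvol : volume P ≠ 0) {x : Plane} {ι : Type*} {F : Finset ι}
    {A : ι → Set Plane} {α : ι → ℝ} (hA : Set.BijOn A F {t ∈ T | x ∈ t})
    (hα : ∀ i ∈ F, HasAngleAt (A i) x (α i)) : ∑ i ∈ F, α i = 2 * Real.pi := by
  have hAT {i : ι} (hi : i ∈ F) : A i ∈ T := (hA.mapsTo hi).1
  have hunion := HasAngleAt.biUnion hα
    (fun i hi ↦ (hT.isCompact_tile hP (hAT hi)).measurableSet.nullMeasurableSet)
    (fun i hi j hj hij ↦ hT.aedisjoint hfr (hAT hi) (hAT hj) (hA.injOn.ne hi hj hij))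
  refine hunion.unique ((HasAngleAt.univ x).congr ?_)
  filter_upwards [hT.eventually_exists_tile hP hfr hvol x] with z hz
  obtain ⟨t, ht, hxt, hzt⟩ := hz
  obtain ⟨i, hi, rfl⟩ := hA.surjOn ⟨ht, hxt⟩
  simpa using ⟨i, hi, hzt⟩

end IsMonohedralTiling

/-- A tile is asymmetric if the identity is its only symmetry. -/
def IsAsymmetric (P : Set Plane) : Prop :=
  ∀ g : Plane ≃ᵢ Plane, g '' P = P → g = 1

lemma IsAsymmetric.eq_of_image_eq {P : Set Plane} (hP : IsAsymmetric P) {g h : Plane ≃ᵢ Plane}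
    (hgh : g '' P = h '' P) : g = h := by
  refine (inv_mul_eq_one.1 (hP (h⁻¹ * g) ?_)).symm
  rw [IsometryEquiv.coe_mul, Set.image_comp, hgh, ← Set.image_comp, ← IsometryEquiv.coe_mul,
    inv_mul_cancel, IsometryEquiv.coe_one, Set.image_id]

/-- The placements of the tile `P` in the tiling `T`: the isometries carrying `P` onto a tile. -/
def placements (P : Set Plane) (T : Set (Set Plane)) : Set (Plane ≃ᵢ Plane) :=
  {g | g '' P ∈ T}

lemma IsIsohedral.mul_inv_mul_mem_placements {P : Set Plane} {T : Set (Set Plane)}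
    (hT : IsIsohedral T) (hP : IsAsymmetric P) {a b c : Plane ≃ᵢ Plane}
    (ha : a ∈ placements P T) (hb : b ∈ placements P T) (hc : c ∈ placements P T) :
    a * b⁻¹ * c ∈ placements P T := by
  obtain ⟨h, hsymm, hba⟩ := hT _ hb _ ha
  have hab : h * b = a := hP.eq_of_image_eq (by rw [← hba, ← Set.image_comp]; rfl)
  have hmem : h '' (c '' P) ∈ T := hsymm.subset (Set.mem_image_of_mem _ hc)
  rwa [← hab, mul_inv_cancel_right, placements, Set.mem_ofPred_eq, IsometryEquiv.coe_mul,
    Set.image_comp]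

lemma mem_image_iff_inv_apply_mem {P : Set Plane} (g : Plane ≃ᵢ Plane) (x : Plane) :
    x ∈ g '' P ↔ g⁻¹ x ∈ P :=
  ⟨by rintro ⟨y, hy, rfl⟩; simpa using hy, fun h ↦ ⟨g⁻¹ x, h, by simp⟩⟩

lemma IsMonohedralTiling.exists_mem_placements {P : Set Plane} {T : Set (Set Plane)}
    (hT : IsMonohedralTiling P T) : ∃ g, g ∈ placements P T := by
  obtain ⟨t, ht, -⟩ := Set.mem_sUnion.1 (hT.2.1.ge (Set.mem_univ 0))
  obtain ⟨g, rfl⟩ := hT.1 t ht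
  exact ⟨g, ht⟩

lemma IsMonohedralTiling.bijOn_placements {P : Set Plane} {T : Set (Set Plane)}
    (hT : IsMonohedralTiling P T) (hP : IsAsymmetric P) (x : Plane) :
    Set.BijOn (fun g : Plane ≃ᵢ Plane ↦ g '' P) {g ∈ placements P T | g⁻¹ x ∈ P}
      {t ∈ T | x ∈ t} := by
  refine ⟨fun g hg ↦ ⟨hg.1, (mem_image_iff_inv_apply_mem g x).2 hg.2⟩,
    fun g _ h _ hgh ↦ hP.eq_of_image_eq hgh, ?_⟩
  rintro t ⟨ht, hxt⟩
  obtain ⟨g, rfl⟩ := hT.1 t ht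
  exact ⟨g, ⟨ht, (mem_image_iff_inv_apply_mem g x).1 hxt⟩, rfl⟩

section Fibres

variable [DecidableEq Plane] {P : Set Plane} {Φ : Set (Plane ≃ᵢ Plane)} {x : Plane}
  {S : Finset (Plane ≃ᵢ Plane)} {a b : Plane ≃ᵢ Plane}

-- Right multiplication by `a⁻¹ * b` carries the fibre of `g ↦ g⁻¹ x` through `a` to that through
-- `b`.
lemma card_filter_inv_apply_le (hΦ : ∀ a ∈ Φ, ∀ b ∈ Φ, ∀ c ∈ Φ, a * b⁻¹ * c ∈ Φ)
    (hS : ∀ g, g ∈ S ↔ g ∈ Φ ∧ g⁻¹ x ∈ P) (ha : a ∈ S) (hb : b ∈ S) :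
    (S.filter fun g ↦ g⁻¹ x = a⁻¹ x).card ≤ (S.filter fun g ↦ g⁻¹ x = b⁻¹ x).card := by
  refine Finset.card_le_card_of_injOn (fun g ↦ g * a⁻¹ * b) (fun g hg ↦ ?_) (fun g _ h _ hgh ↦ ?_)
  · obtain ⟨hgS, hgx⟩ := Finset.mem_filter.1 hg
    have hx : (g * a⁻¹ * b)⁻¹ x = b⁻¹ x := by
      simp [mul_inv_rev, IsometryEquiv.mul_apply, hgx]
    refine Finset.mem_filter.2 ⟨(hS _).2 ⟨?_, ?_⟩, hx⟩
    · exact hΦ g ((hS g).1 hgS).1 a ((hS a).1 ha).1 b ((hS b).1 hb).1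
    · exact hx ▸ ((hS b).1 hb).2
  · simpa using hgh

lemma sum_inv_apply_eq_card_mul_sum_image (hΦ : ∀ a ∈ Φ, ∀ b ∈ Φ, ∀ c ∈ Φ, a * b⁻¹ * c ∈ Φ)
    (hS : ∀ g, g ∈ S ↔ g ∈ Φ ∧ g⁻¹ x ∈ P) (ha : a ∈ S) (θ : Plane → ℝ) :
    ∑ g ∈ S, θ (g⁻¹ x) =
      (S.filter fun g ↦ g⁻¹ x = a⁻¹ x).card * ∑ y ∈ S.image fun g ↦ g⁻¹ x, θ y := by
  rw [Finset.sum_comp θ fun g : Plane ≃ᵢ Plane ↦ g⁻¹ x, Finset.mul_sum]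
  refine Finset.sum_congr rfl fun y hy ↦ ?_
  obtain ⟨b, hb, rfl⟩ := Finset.mem_image.1 hy
  rw [(card_filter_inv_apply_le hΦ hS hb ha).antisymm (card_filter_inv_apply_le hΦ hS ha hb),
    nsmul_eq_mul]

end Fibres

theorem IsMonohedralTiling.exists_mul_sum_angle_eq {P : Set Plane} {T : Set (Set Plane)}
    (hT : IsMonohedralTiling P T) (hiso : IsIsohedral T) (hasymm : IsAsymmetric P)
    (hP : IsCompact P) (hfr : volume (frontier P) = 0) {θ : Plane → ℝ}
    (hθ : ∀ x ∈ P, HasAngleAt P x (θ x)) {x₀ : Plane} (hx₀ : x₀ ∈ P) (hθ₀ : θ x₀ ≠ 0) :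
    ∃ (m : ℕ) (X : Finset Plane), ↑X ⊆ P ∧ x₀ ∈ X ∧ m * ∑ x ∈ X, θ x = 2 * Real.pi := by
  classical
  have hvol := (hθ x₀ hx₀).volume_ne_zero hθ₀
  obtain ⟨g₀, hg₀⟩ := hT.exists_mem_placements
  have hbij := hT.bijOn_placements hasymm (g₀ x₀)
  obtain ⟨S, hS⟩ := (hbij.finite_iff_finite.2
    (hT.finite_tiles_at hP hfr hvol (g₀ x₀))).exists_finset_coe
  have hmem (g : Plane ≃ᵢ Plane) : g ∈ S ↔ g ∈ placements P T ∧ g⁻¹ (g₀ x₀) ∈ P := by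
    rw [← Finset.mem_coe, hS]
    rfl
  have hg₀S : g₀ ∈ S := (hmem g₀).2 ⟨hg₀, by simpa using hx₀⟩
  have hsum : ∑ g ∈ S, θ (g⁻¹ (g₀ x₀)) = 2 * Real.pi := by
    refine hT.sum_angle_eq_two_pi hP hfr hvol (hS ▸ hbij) fun g hg ↦ ?_
    simpa using (hθ _ ((hmem g).1 hg).2).image g
  refine ⟨_, S.image fun g ↦ g⁻¹ (g₀ x₀), ?_, Finset.mem_image.2 ⟨g₀, hg₀S, by simp⟩,
    (sum_inv_apply_eq_card_mul_sum_image (fun a ha b hb c hc ↦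
      hiso.mul_inv_mul_mem_placements hasymm ha hb hc) hmem hg₀S θ).symm.trans hsum⟩
  simpa [Set.subset_def] using fun g hg ↦ ((hmem g).1 hg).2

lemma isMonohedralTiling_orbit {P : Set Plane} {ι : Type*} (G : Subgroup (Plane ≃ᵢ Plane))
    (c : ι → Plane ≃ᵢ Plane) (hcover : ∀ z, ∃ g ∈ G, ∃ i, c i (g z) ∈ P)
    (hdisj : ∀ g ∈ G, ∀ i j z, c i z ∈ interior P → c j (g z) ∈ interior P → g = 1 ∧ i = j) :
    IsMonohedralTiling P {t | ∃ g ∈ G, ∃ i, t = (c i * g) ⁻¹' P} := by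
  refine ⟨?_, Set.eq_univ_of_forall fun z ↦ ?_, ?_⟩
  · rintro _ ⟨g, -, i, rfl⟩
    exact ⟨(c i * g).symm, by rw [← IsometryEquiv.preimage_symm, IsometryEquiv.symm_symm]⟩
  · obtain ⟨g, hg, i, hz⟩ := hcover z
    exact ⟨_, ⟨g, hg, i, rfl⟩, hz⟩
  · rintro _ ⟨g, hg, i, rfl⟩ _ ⟨h, hh, j, rfl⟩ hne
    by_contra hinter
    obtain ⟨z, hz⟩ := Set.nonempty_iff_ne_empty.2 hinter
    simp only [← IsometryEquiv.coe_toHomeomorph, ← Homeomorph.preimage_interior] at hz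
    obtain ⟨hgh, rfl⟩ :=
      hdisj (h * g⁻¹) (G.mul_mem hh (G.inv_mem hg)) i j (g z) hz.1 (by simpa using hz.2)
    exact hne (by rw [mul_inv_eq_one.1 hgh])

/-! ### The pentagon -/

/-- The point `(x, √3 y)`. In these coordinates, adapted to a triangular lattice, the pentagon and
its tiling are defined over the integers. -/
def hexPoint (x y : ℝ) : Plane := !₂[x, √3 * y]

/-- The first coordinate with respect to `hexPoint`. -/
def hexX : Plane →ₗ[ℝ] ℝ := (EuclideanSpace.proj 0).toLinearMap

/-- The second coordinate with respect to `hexPoint`. -/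
def hexY : Plane →ₗ[ℝ] ℝ := (√3)⁻¹ • (EuclideanSpace.proj 1).toLinearMap

@[simp]
lemma hexX_hexPoint (x y : ℝ) : hexX (hexPoint x y) = x := by
  simp [hexX, hexPoint]

@[simp]
lemma hexY_hexPoint (x y : ℝ) : hexY (hexPoint x y) = y := by
  simp [hexY, hexPoint]

lemma inner_eq_hex (z w : Plane) : inner ℝ z w = hexX z * hexX w + 3 * (hexY z * hexY w) := by
  have h3 : (√3)⁻¹ * (√3)⁻¹ = (3 : ℝ)⁻¹ := by
    rw [← mul_inv, Real.mul_self_sqrt zero_le_three]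
  simp only [PiLp.inner_apply, Fin.sum_univ_two, hexX, hexY, LinearMap.smul_apply, smul_eq_mul,
    ContinuousLinearMap.coe_coe, PiLp.proj_apply, Real.inner_apply]
  linear_combination (-3 * (z 1 * w 1)) * h3

lemma norm_sq_eq_hex (z : Plane) : ‖z‖ ^ 2 = hexX z ^ 2 + 3 * hexY z ^ 2 := by
  rw [← real_inner_self_eq_norm_sq, inner_eq_hex]
  ring

lemma dist_sq_eq_hex (z w : Plane) :
    dist z w ^ 2 = (hexX z - hexX w) ^ 2 + 3 * (hexY z - hexY w) ^ 2 := by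
  rw [dist_eq_norm, norm_sq_eq_hex, map_sub, map_sub]

lemma hex_ext {z w : Plane} (hX : hexX z = hexX w) (hY : hexY z = hexY w) : z = w := by
  have hdist : dist z w ^ 2 = 0 := by simp [dist_sq_eq_hex, hX, hY]
  exact dist_eq_zero.1 (pow_eq_zero_iff two_ne_zero |>.1 hdist)

lemma isometry_of_hex {f : Plane → Plane}
    (hf : ∀ z w, (hexX (f z) - hexX (f w)) ^ 2 + 3 * (hexY (f z) - hexY (f w)) ^ 2 =
      (hexX z - hexX w) ^ 2 + 3 * (hexY z - hexY w) ^ 2) : Isometry f :=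
  Isometry.of_dist_eq fun z w ↦ (sq_eq_sq₀ dist_nonneg dist_nonneg).1 <| by
    rw [dist_sq_eq_hex, dist_sq_eq_hex, hf]

lemma angle_eq_of_hex {u v w : Plane} {r θ : ℝ} (hr : 0 < r) (hθ : θ ∈ Set.Icc 0 Real.pi)
    (hnorm : ((hexX u - hexX v) ^ 2 + 3 * (hexY u - hexY v) ^ 2) *
      ((hexX w - hexX v) ^ 2 + 3 * (hexY w - hexY v) ^ 2) = r ^ 2)
    (hinner : (hexX u - hexX v) * (hexX w - hexX v) +
      3 * ((hexY u - hexY v) * (hexY w - hexY v)) = r * Real.cos θ) : ∠ u v w = θ := by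
  have hnorm' : ‖u - v‖ * ‖w - v‖ = r := by
    rw [← sq_eq_sq₀ (by positivity) hr.le, mul_pow, norm_sq_eq_hex, norm_sq_eq_hex]
    simpa only [map_sub] using hnorm
  rw [EuclideanGeometry.angle, vsub_eq_sub, vsub_eq_sub, InnerProductGeometry.angle, hnorm',
    inner_eq_hex, map_sub, map_sub, map_sub, map_sub, hinner, mul_div_cancel_left₀ _ hr.ne',
    Real.arccos_cos hθ.1 hθ.2]

/-- The affine function with coefficients `a`, `b` and constant term `c` in the coordinates
`hexX`, `hexY`. -/
def hexAffine (a b c : ℝ) : Plane →ᵃ[ℝ] ℝ :=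
  (a • hexX + b • hexY).toAffineMap + AffineMap.const ℝ Plane c

@[simp]
lemma hexAffine_apply (a b c : ℝ) (z : Plane) :
    hexAffine a b c z = a * hexX z + b * hexY z + c := by
  simp [hexAffine]

lemma mem_of_hex_eq {S : Set Plane} (hS : Convex ℝ S) {u v w z : Plane} (hu : u ∈ S)
    (hv : v ∈ S) (hw : w ∈ S) {b c : ℝ} (hb : 0 ≤ b) (hc : 0 ≤ c) (hbc : b + c ≤ 1)
    (hX : hexX z = hexX u + b * (hexX v - hexX u) + c * (hexX w - hexX u))
    (hY : hexY z = hexY u + b * (hexY v - hexY u) + c * (hexY w - hexY u)) : z ∈ S := by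
  have hz : z = ∑ i, ![1 - b - c, b, c] i • ![u, v, w] i := by
    refine hex_ext ?_ ?_
    · simp only [Fin.sum_univ_three, Matrix.cons_val, map_add, map_smul, smul_eq_mul, hX]
      ring
    · simp only [Fin.sum_univ_three, Matrix.cons_val, map_add, map_smul, smul_eq_mul, hY]
      ring
  rw [hz]
  refine hS.sum_mem ?_ ?_ ?_
  · have ha : 0 ≤ 1 - b - c := by linarith
    simpa only [Fin.forall_fin_succ, Finset.mem_univ, forall_const] using ⟨ha, hb, hc, finZeroElim⟩
  · simp only [Fin.sum_univ_three, Matrix.cons_val]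
    ring
  · simp [Fin.forall_fin_succ, hu, hv, hw]

/-- The vertices of the pentagon. -/
def vertex : Fin 5 → Plane :=
  ![hexPoint (-2) (-1), hexPoint 8 (-3), hexPoint 16 1, hexPoint 14 7, hexPoint 4 5]

/-- The equations of the sides of the pentagon, nonnegative on its interior. -/
def sideEquation : Fin 5 → Plane →ᵃ[ℝ] ℝ :=
  ![hexAffine 1 5 7, hexAffine (-1) 2 14, hexAffine (-3) (-1) 49, hexAffine 1 (-5) 21,
    hexAffine 1 (-1) 1]

lemma forall_sideEquation_iff (p : ℝ → Prop) (z : Plane) :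
    (∀ i, p (sideEquation i z)) ↔
      p (hexX z + 5 * hexY z + 7) ∧ p (-hexX z + 2 * hexY z + 14) ∧
      p (-3 * hexX z - hexY z + 49) ∧ p (hexX z - 5 * hexY z + 21) ∧ p (hexX z - hexY z + 1) := by
  simp [Fin.forall_fin_succ, sideEquation, sub_eq_add_neg]

lemma isSideSystem_vertex : IsSideSystem vertex sideEquation where
  three_le := by norm_num
  nonneg i j := by
    fin_cases i <;> fin_cases j <;> norm_num [vertex, sideEquation]
  eq_zero_iff i j := by
    fin_cases i <;> fin_cases j <;>
      norm_num [vertex, sideEquation, Fin.ext_iff, Fin.val_add]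
  mem_convexHull z hz := by
    have hV (i : Fin 5) := subset_convexHull ℝ (Set.range vertex) (Set.mem_range_self i)
    have hconv := convex_convexHull ℝ (Set.range vertex)
    obtain ⟨h0, h1, h2, h3, h4⟩ := (forall_sideEquation_iff (0 ≤ ·) z).1 hz
    -- The diagonals from `vertex 0` cut the pentagon into three triangles.
    rcases le_total (9 * hexY z + 7) (hexX z) with h02 | h02
    · refine mem_of_hex_eq hconv (hV 0) (hV 1) (hV 2) (b := (hexX z - 9 * hexY z - 7) / 28)
        (c := (hexX z + 5 * hexY z + 7) / 28) ?_ ?_ ?_ ?_ ?_ <;>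
      first | linarith | (simp [vertex]; linarith)
    rcases le_total (2 * hexY z) (hexX z) with h03 | h03
    · refine mem_of_hex_eq hconv (hV 0) (hV 2) (hV 3) (b := (hexX z - 2 * hexY z) / 14)
        (c := (9 * hexY z + 7 - hexX z) / 56) ?_ ?_ ?_ ?_ ?_ <;>
      first | linarith | (simp [vertex]; linarith)
    · refine mem_of_hex_eq hconv (hV 0) (hV 3) (hV 4) (b := (hexX z - hexY z + 1) / 8)
        (c := (2 * hexY z - hexX z) / 6) ?_ ?_ ?_ ?_ ?_ <;>
      first | linarith | (simp [vertex]; linarith)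

/-- The pentagon. Its sides `0`, `1`, `2`, `3` have equal length, and its angles are
`α - π / 3`, `2 * π / 3`, `2 * π / 3`, `2 * π - 2 * α` and `α` with `cos α = -2 / √7`. -/
def pentagon : ConvexPentagon :=
  isSideSystem_vertex.toConvexPolygon

lemma mem_pentagon_iff {z : Plane} : z ∈ pentagon.carrier ↔
    0 ≤ hexX z + 5 * hexY z + 7 ∧ 0 ≤ -hexX z + 2 * hexY z + 14 ∧
    0 ≤ -3 * hexX z - hexY z + 49 ∧ 0 ≤ hexX z - 5 * hexY z + 21 ∧ 0 ≤ hexX z - hexY z + 1 :=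
  isSideSystem_vertex.mem_carrier_iff.trans (forall_sideEquation_iff (0 ≤ ·) z)

lemma pos_of_mem_interior_pentagon {z : Plane} (hz : z ∈ interior pentagon.carrier) :
    0 < hexX z + 5 * hexY z + 7 ∧ 0 < -hexX z + 2 * hexY z + 14 ∧
    0 < -3 * hexX z - hexY z + 49 ∧ 0 < hexX z - 5 * hexY z + 21 ∧ 0 < hexX z - hexY z + 1 :=
  (forall_sideEquation_iff (0 < ·) z).1 (isSideSystem_vertex.pos_of_mem_interior hz)

lemma isCompact_pentagon : IsCompact pentagon.carrier :=
  (Set.finite_range pentagon.V).isCompact_convexHull ℝ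

lemma volume_frontier_pentagon : volume (frontier pentagon.carrier) = 0 :=
  (convex_convexHull ℝ (Set.range pentagon.V)).addHaar_frontier volume

lemma two_div_sqrt_seven_mem : 2 / √7 ∈ Set.Ioo (1 / 2) (√3 / 2) := by
  have h7 : √7 ^ 2 = 7 := Real.sq_sqrt (by norm_num)
  have h3 : √3 ^ 2 = 3 := Real.sq_sqrt (by norm_num)
  rw [Set.mem_Ioo, div_lt_div_iff₀ two_pos (by positivity), div_lt_div_iff₀ (by positivity) two_pos]
  refine ⟨?_, ?_⟩
  · nlinarith
  · refine lt_of_pow_lt_pow_left₀ 2 (by positivity) ?_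
    rw [mul_pow (√3), h3, h7]
    norm_num

/-- The angle `α` of the pentagon at `vertex 4`. -/
def largeAngle : ℝ := Real.pi - Real.arccos (2 / √7)

lemma cos_arccos_two_div_sqrt_seven : Real.cos (Real.arccos (2 / √7)) = 2 / √7 := by
  have hsqrt3 : √3 ≤ 2 := Real.sqrt_le_iff.2 (by norm_num)
  exact Real.cos_arccos (by linarith [two_div_sqrt_seven_mem.1])
    (by linarith [two_div_sqrt_seven_mem.2])

lemma cos_largeAngle : Real.cos largeAngle = -(2 / √7) := by
  rw [largeAngle, Real.cos_pi_sub, cos_arccos_two_div_sqrt_seven]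

lemma sin_largeAngle : Real.sin largeAngle = √3 / √7 := by
  rw [largeAngle, Real.sin_pi_sub, Real.sin_arccos, div_pow, Real.sq_sqrt (by norm_num),
    ← Real.sqrt_div' _ (by norm_num)]
  norm_num

lemma largeAngle_mem : largeAngle ∈ Set.Ioo (2 * Real.pi / 3) (5 * Real.pi / 6) := by
  have hπ := Real.pi_pos
  have harccos : Real.arccos (2 / √7) ∈ Set.Icc 0 Real.pi :=
    ⟨Real.arccos_nonneg _, Real.arccos_le_pi _⟩
  have hlt : Real.arccos (2 / √7) < Real.pi / 3 := by
    rw [← Real.strictAntiOn_cos.lt_iff_gt ⟨by linarith, by linarith⟩ harccos,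
      cos_arccos_two_div_sqrt_seven, Real.cos_pi_div_three]
    exact two_div_sqrt_seven_mem.1
  have hgt : Real.pi / 6 < Real.arccos (2 / √7) := by
    rw [← Real.strictAntiOn_cos.lt_iff_gt harccos ⟨by linarith, by linarith⟩,
      cos_arccos_two_div_sqrt_seven, Real.cos_pi_div_six]
    exact two_div_sqrt_seven_mem.2
  constructor <;> rw [largeAngle] <;> linarith

lemma cos_two_pi_div_three : Real.cos (2 * Real.pi / 3) = -(1 / 2) := by
  rw [← Real.cos_pi_div_three, ← Real.cos_pi_sub]
  ring_nf

lemma pentagon_angle_four : pentagon.angle 4 = largeAngle := by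
  have hα := largeAngle_mem
  have hπ := Real.pi_pos
  refine angle_eq_of_hex (u := hexPoint 14 7) (v := hexPoint 4 5) (w := hexPoint (-2) (-1))
    (r := 48 * √7) (by positivity) ⟨by linarith [hα.1], by linarith [hα.2]⟩ ?_ ?_
  · norm_num [mul_pow]
  · rw [cos_largeAngle]
    field_simp
    norm_num

lemma pentagon_angle_zero : pentagon.angle 0 = largeAngle - Real.pi / 3 := by
  have hα := largeAngle_mem
  have hπ := Real.pi_pos
  refine angle_eq_of_hex (u := hexPoint 4 5) (v := hexPoint (-2) (-1)) (w := hexPoint 8 (-3))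
    (r := 48 * √7) (by positivity) ⟨by linarith [hα.1], by linarith [hα.2]⟩ ?_ ?_
  · norm_num [mul_pow]
  · rw [Real.cos_sub, cos_largeAngle, sin_largeAngle, Real.cos_pi_div_three,
      Real.sin_pi_div_three]
    field_simp
    norm_num

lemma pentagon_angle_one : pentagon.angle 1 = 2 * Real.pi / 3 := by
  have hπ := Real.pi_pos
  refine angle_eq_of_hex (u := hexPoint (-2) (-1)) (v := hexPoint 8 (-3)) (w := hexPoint 16 1)
    (r := 112) (by norm_num) ⟨by linarith, by linarith⟩ ?_ ?_
  · norm_num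
  · norm_num [cos_two_pi_div_three]

lemma pentagon_angle_two : pentagon.angle 2 = 2 * Real.pi / 3 := by
  have hπ := Real.pi_pos
  refine angle_eq_of_hex (u := hexPoint 8 (-3)) (v := hexPoint 16 1) (w := hexPoint 14 7)
    (r := 112) (by norm_num) ⟨by linarith, by linarith⟩ ?_ ?_
  · norm_num
  · norm_num [cos_two_pi_div_three]

lemma pentagon_angle_three : pentagon.angle 3 = 2 * Real.pi - 2 * largeAngle := by
  have hα := largeAngle_mem
  have hπ := Real.pi_pos
  refine angle_eq_of_hex (u := hexPoint 16 1) (v := hexPoint 14 7) (w := hexPoint 4 5)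
    (r := 112) (by norm_num) ⟨by linarith [hα.2], by linarith [hα.1]⟩ ?_ ?_
  · norm_num
  · rw [Real.cos_two_pi_sub, Real.cos_two_mul, cos_largeAngle, neg_sq, div_pow,
      Real.sq_sqrt (by norm_num)]
    norm_num

lemma eq_four_of_angle_eq {j : Fin 5} (hj : pentagon.angle j = pentagon.angle 4) : j = 4 := by
  have hα := largeAngle_mem
  rw [pentagon_angle_four] at hj
  fin_cases j
  · linarith [pentagon_angle_zero.symm.trans hj, hα.1, hα.2]
  · linarith [pentagon_angle_one.symm.trans hj, hα.1]
  · linarith [pentagon_angle_two.symm.trans hj, hα.1]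
  · linarith [pentagon_angle_three.symm.trans hj, hα.1]
  · rfl

lemma eq_one_or_eq_two_of_angle_eq {j : Fin 5} (hj : pentagon.angle j = 2 * Real.pi / 3) :
    j = 1 ∨ j = 2 := by
  have hα := largeAngle_mem
  fin_cases j
  · linarith [pentagon_angle_zero.symm.trans hj, hα.1, hα.2]
  · exact Or.inl rfl
  · exact Or.inr rfl
  · linarith [pentagon_angle_three.symm.trans hj, hα.1]
  · linarith [pentagon_angle_four.symm.trans hj, hα.1]

lemma dist_vertex_one_four_ne : dist (vertex 1) (vertex 4) ≠ dist (vertex 2) (vertex 4) := by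
  refine fun h ↦ absurd (congrArg (· ^ 2) h) ?_
  simp only [dist_sq_eq_hex, vertex, Matrix.cons_val, hexX_hexPoint, hexY_hexPoint]
  norm_num

lemma eq_of_dist_vertex_eq {z w : Plane} (h1 : dist z (vertex 1) = dist w (vertex 1))
    (h2 : dist z (vertex 2) = dist w (vertex 2)) (h4 : dist z (vertex 4) = dist w (vertex 4)) :
    z = w := by
  rw [← sq_eq_sq₀ dist_nonneg dist_nonneg, dist_sq_eq_hex, dist_sq_eq_hex] at h1 h2 h4
  simp only [vertex, Matrix.cons_val, hexX_hexPoint, hexY_hexPoint] at h1 h2 h4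
  apply hex_ext <;> linarith

theorem isAsymmetric_pentagon : IsAsymmetric pentagon.carrier := by
  intro g hg
  have hα := largeAngle_mem
  have himage (i : Fin 5) (hi : pentagon.angle i < Real.pi) :
      ∃ j, g (vertex i) = vertex j ∧ pentagon.angle i = pentagon.angle j := by
    have hangle := (isSideSystem_vertex.hasAngleAt_vertex i).image g
    refine isSideSystem_vertex.exists_eq_vertex_of_hasAngleAt ?_ (hg ▸ hangle) hi
    exact hg.subset (Set.mem_image_of_mem g (subset_convexHull ℝ _ (Set.mem_range_self i)))
  have h4 : g (vertex 4) = vertex 4 := by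
    obtain ⟨j, hj, hangle⟩ := himage 4 (by linarith [pentagon_angle_four, hα.2, Real.pi_pos])
    rwa [eq_four_of_angle_eq hangle.symm] at hj
  have h1 : g (vertex 1) = vertex 1 := by
    obtain ⟨j, hj, hangle⟩ := himage 1 (by linarith [pentagon_angle_one, Real.pi_pos])
    rcases eq_one_or_eq_two_of_angle_eq (hangle.symm.trans pentagon_angle_one) with rfl | rfl
    · exact hj
    · exact absurd (by rw [← hj, ← g.dist_eq, h4]) dist_vertex_one_four_ne
  have h2 : g (vertex 2) = vertex 2 := by
    obtain ⟨j, hj, hangle⟩ := himage 2 (by linarith [pentagon_angle_two, Real.pi_pos])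
    rcases eq_one_or_eq_two_of_angle_eq (hangle.symm.trans pentagon_angle_two) with rfl | rfl
    · exact absurd (by rw [← hj, ← g.dist_eq (vertex 2), h4]) dist_vertex_one_four_ne
    · exact hj
  ext1 z
  have hdist {v : Plane} (hv : g v = v) : dist (g z) v = dist z v := by
    rw [← g.dist_eq z v, hv]
  exact eq_of_dist_vertex_eq (hdist h1) (hdist h2) (hdist h4)

lemma pentagon_angle_pos (i : Fin 5) : 0 < pentagon.angle i := by
  have hα := largeAngle_mem
  have hπ := Real.pi_pos
  fin_cases i
  · exact pentagon_angle_zero ▸ (by linarith [hα.1] : 0 < largeAngle - Real.pi / 3)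
  · exact pentagon_angle_one ▸ (by positivity : 0 < 2 * Real.pi / 3)
  · exact pentagon_angle_two ▸ (by positivity : 0 < 2 * Real.pi / 3)
  · exact pentagon_angle_three ▸ (by linarith [hα.2] : 0 < 2 * Real.pi - 2 * largeAngle)
  · exact pentagon_angle_four ▸ (by linarith [hα.1] : 0 < largeAngle)

lemma mul_sum_angle_ne_two_pi {I : Finset (Fin 5)} (hI : 4 ∈ I) (m k : ℕ) :
    m * (∑ i ∈ I, pentagon.angle i + k * Real.pi) ≠ 2 * Real.pi := by
  intro h
  obtain ⟨hα, hα'⟩ := largeAngle_mem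
  have hπ := Real.pi_pos
  have hkπ : 0 ≤ k * Real.pi := by positivity
  have hle : largeAngle ≤ ∑ i ∈ I, pentagon.angle i :=
    pentagon_angle_four ▸ Finset.single_le_sum (fun i _ ↦ (pentagon_angle_pos i).le) hI
  have hm : m < 3 := by
    by_contra! hm
    have hm' : (3 : ℝ) ≤ m := by exact_mod_cast hm
    nlinarith
  have hm0 : m ≠ 0 := by
    rintro rfl
    simp at h
  have hk : k < 2 := by
    by_contra! hk
    have hk' : (2 : ℝ) ≤ k := by exact_mod_cast hk
    have hm' : (1 : ℝ) ≤ m := by exact_mod_cast Nat.one_le_iff_ne_zero.2 hm0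
    nlinarith
  rw [← Finset.univ_inter I, ← Finset.sum_ite_mem, Fin.sum_univ_five, if_pos hI,
    pentagon_angle_zero, pentagon_angle_one, pentagon_angle_two, pentagon_angle_three,
    pentagon_angle_four] at h
  interval_cases m <;> interval_cases k <;> split_ifs at h <;> norm_num at h <;> linarith

/-! ### The tiling -/

lemma exists_eq_neg_one_zpow_mul (p q : ℤ) :
    ∃ q' : ℤ, (q' : ℝ) = (-1) ^ p * q ∧ (-1 : ℝ) ^ q' = (-1) ^ q := by
  rcases Int.even_or_odd p with hp | hp
  · exact ⟨q, by rw [hp.neg_one_zpow, one_mul], rfl⟩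
  · refine ⟨-q, by rw [hp.neg_one_zpow]; push_cast; ring, ?_⟩
    rw [zpow_neg, ← inv_zpow, inv_neg_one]

lemma neg_one_zpow_mul_self (p : ℤ) : (-1 : ℝ) ^ p * (-1) ^ p = 1 := by
  rw [← mul_zpow, neg_mul_neg, one_mul, one_zpow]

/-- The isometry `g` is the element of index `(p, q)` of the group `pgg`: in the coordinates `hexX`,
`hexY` it is a translation by `(-18 p, -12 q)` followed by sign changes, the sign of each coordinate
being given by the parity of the index of the other one. -/
def IsGlide (p q : ℤ) (g : Plane ≃ᵢ Plane) : Prop :=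
  ∀ z, hexX (g z) = (-1) ^ q * (hexX z - 18 * p) ∧ hexY (g z) = (-1) ^ p * (hexY z - 12 * q)

lemma exists_isGlide (p q : ℤ) : ∃ g, IsGlide p q g := by
  have hp := neg_one_zpow_mul_self p
  have hq := neg_one_zpow_mul_self q
  let f (z : Plane) : Plane :=
    hexPoint ((-1) ^ q * (hexX z - 18 * p)) ((-1) ^ p * (hexY z - 12 * q))
  let f' (z : Plane) : Plane :=
    hexPoint ((-1) ^ q * hexX z + 18 * p) ((-1) ^ p * hexY z + 12 * q)
  have hf : Isometry f := isometry_of_hex fun z w ↦ by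
    simp only [f, hexX_hexPoint, hexY_hexPoint]
    linear_combination (hexX z - hexX w) ^ 2 * hq + 3 * (hexY z - hexY w) ^ 2 * hp
  refine ⟨.mk' f f' (fun z ↦ hex_ext ?_ ?_) hf, fun z ↦ ⟨hexX_hexPoint _ _, hexY_hexPoint _ _⟩⟩
  · simp only [f, f', hexX_hexPoint]
    linear_combination hexX z * hq
  · simp only [f, f', hexY_hexPoint]
    linear_combination hexY z * hp

/-- The group generated by two perpendicular families of glide reflections (the wallpaper group
`pgg`) with translation lattice spanned by `hexPoint 36 0` and `hexPoint 0 24`. -/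
def pgg : Subgroup (Plane ≃ᵢ Plane) where
  carrier := {g | ∃ p q, IsGlide p q g}
  one_mem' := ⟨0, 0, fun z ↦ by simp⟩
  mul_mem' := by
    rintro g h ⟨p, q, hg⟩ ⟨p', q', hh⟩
    obtain ⟨r, hr, hr'⟩ := exists_eq_neg_one_zpow_mul q' p
    obtain ⟨s, hs, hs'⟩ := exists_eq_neg_one_zpow_mul p' q
    have hneg : (-1 : ℝ) ≠ 0 := by norm_num
    refine ⟨p' + r, q' + s, fun z ↦ ?_⟩
    rw [IsometryEquiv.mul_apply, (hg _).1, (hg _).2, (hh z).1, (hh z).2, zpow_add₀ hneg,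
      zpow_add₀ hneg, hr', hs']
    push_cast
    rw [hr, hs]
    constructor
    · linear_combination (18 * p * (-1) ^ q) * neg_one_zpow_mul_self q'
    · linear_combination (12 * q * (-1) ^ p) * neg_one_zpow_mul_self p'
  inv_mem' := by
    rintro g ⟨p, q, hg⟩
    obtain ⟨r, hr, hr'⟩ := exists_eq_neg_one_zpow_mul q (-p)
    obtain ⟨s, hs, hs'⟩ := exists_eq_neg_one_zpow_mul p (-q)
    have hp := neg_one_zpow_mul_self p
    have hq := neg_one_zpow_mul_self q
    refine ⟨r, s, fun z ↦ ?_⟩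
    obtain ⟨hX, hY⟩ := hg (g⁻¹ z)
    rw [IsometryEquiv.apply_inv_self] at hX hY
    rw [hr, hs, hr', hs', zpow_neg, zpow_neg, ← inv_zpow, ← inv_zpow, inv_neg_one, hX, hY]
    push_cast
    constructor
    · linear_combination (-hexX (g⁻¹ z)) * hq
    · linear_combination (-hexY (g⁻¹ z)) * hp

lemma IsGlide.eq_one {g : Plane ≃ᵢ Plane} (hg : IsGlide 0 0 g) : g = 1 := by
  ext1 z
  exact hex_ext (by simpa using (hg z).1) (by simpa using (hg z).2)

/-- The reflection in the side of the pentagon from `vertex 4` to `vertex 0`. -/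
def mirror : Plane ≃ᵢ Plane :=
  let f (z : Plane) : Plane :=
    hexPoint ((-hexX z + 3 * hexY z - 3) / 2) ((hexX z + hexY z + 1) / 2)
  .mk' f f
    (fun z ↦ hex_ext (by simp only [f, hexX_hexPoint, hexY_hexPoint]; ring)
      (by simp only [f, hexX_hexPoint, hexY_hexPoint]; ring))
    (isometry_of_hex fun z w ↦ by simp only [f, hexX_hexPoint, hexY_hexPoint]; ring)

lemma hexX_mirror (z : Plane) : hexX (mirror z) = (-hexX z + 3 * hexY z - 3) / 2 :=
  hexX_hexPoint _ _

lemma hexY_mirror (z : Plane) : hexY (mirror z) = (hexX z + hexY z + 1) / 2 :=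
  hexY_hexPoint _ _

/-- The two placements of the pentagon making up a fundamental domain of `pgg`: `false` stands for
the pentagon itself and `true` for its mirror image in a side. -/
def pairPlacement : Bool → Plane ≃ᵢ Plane
  | false => 1
  | true => mirror

lemma mirror_mem_pentagon {z : Plane} (h0 : 0 ≤ hexX z + 2 * hexY z + 4)
    (h1 : 0 ≤ 3 * hexX z - hexY z + 33) (h2 : 0 ≤ hexX z - 5 * hexY z + 53)
    (h3 : 0 ≤ -3 * hexX z - hexY z + 17) (h4 : 0 ≤ -hexX z + hexY z - 1) :
    mirror z ∈ pentagon.carrier := by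
  rw [mem_pentagon_iff, hexX_mirror, hexY_mirror]
  refine ⟨?_, ?_, ?_, ?_, ?_⟩ <;> linarith

lemma pos_of_mirror_mem_interior_pentagon {z : Plane}
    (hz : mirror z ∈ interior pentagon.carrier) :
    0 < hexX z + 2 * hexY z + 4 ∧ 0 < 3 * hexX z - hexY z + 33 ∧
    0 < hexX z - 5 * hexY z + 53 ∧ 0 < -3 * hexX z - hexY z + 17 ∧
    0 < -hexX z + hexY z - 1 := by
  obtain ⟨h0, h1, h2, h3, h4⟩ := pos_of_mem_interior_pentagon hz
  rw [hexX_mirror, hexY_mirror] at h0 h1 h2 h3 h4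
  refine ⟨?_, ?_, ?_, ?_, ?_⟩ <;> linarith

lemma bounds_of_pairPlacement_mem_interior {i : Bool} {z : Plane}
    (hz : pairPlacement i z ∈ interior pentagon.carrier) :
    hexX z ∈ Set.Ioo (-10) 16 ∧ hexY z ∈ Set.Ioo (-3) 11 := by
  cases i
  · obtain ⟨h0, h1, h2, h3, h4⟩ := pos_of_mem_interior_pentagon (z := z) hz
    refine ⟨⟨?_, ?_⟩, ?_, ?_⟩ <;> linarith
  · obtain ⟨h0, h1, h2, h3, h4⟩ := pos_of_mirror_mem_interior_pentagon (z := z) hz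
    refine ⟨⟨?_, ?_⟩, ?_, ?_⟩ <;> linarith

section Disjoint

variable {p q : ℤ} {g : Plane ≃ᵢ Plane} {z : Plane}

lemma IsGlide.index_mem_Ioo (hg : IsGlide p q g) {i j : Bool}
    (hi : pairPlacement i z ∈ interior pentagon.carrier)
    (hj : pairPlacement j (g z) ∈ interior pentagon.carrier) :
    p ∈ Set.Ioo (-2) 2 ∧ q ∈ Set.Ioo (-2) 2 := by
  obtain ⟨hX, hY⟩ := bounds_of_pairPlacement_mem_interior hi
  obtain ⟨hX', hY'⟩ := bounds_of_pairPlacement_mem_interior hj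
  simp only [Set.mem_Ioo, (hg z).1, (hg z).2] at hX hY hX' hY' ⊢
  have hp : (-2 : ℝ) < p ∧ (p : ℝ) < 2 := by
    rcases Int.even_or_odd q with h | h <;> rw [h.neg_one_zpow] at hX' <;> constructor <;> linarith
  have hq : (-2 : ℝ) < q ∧ (q : ℝ) < 2 := by
    rcases Int.even_or_odd p with h | h <;> rw [h.neg_one_zpow] at hY' <;> constructor <;> linarith
  exact_mod_cast And.intro hp hq

lemma IsGlide.eq_one_of_mem_interior (hg : IsGlide p q g) (hz : z ∈ interior pentagon.carrier)
    (hgz : g z ∈ interior pentagon.carrier) : g = 1 := by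
  obtain ⟨⟨hp, hp'⟩, hq, hq'⟩ := hg.index_mem_Ioo (i := false) (j := false) hz hgz
  obtain ⟨a0, -, a2, a3, a4⟩ := pos_of_mem_interior_pentagon hz
  obtain ⟨b0, b1, b2, b3, b4⟩ := pos_of_mem_interior_pentagon hgz
  rw [(hg z).1, (hg z).2] at b0 b1 b2 b3 b4
  suffices p = 0 ∧ q = 0 by
    obtain ⟨rfl, rfl⟩ := this
    exact hg.eq_one
  interval_cases p <;> interval_cases q <;> norm_num at b0 b1 b2 b3 b4 ⊢ <;> linarith

lemma IsGlide.eq_one_of_mirror_mem_interior (hg : IsGlide p q g)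
    (hz : mirror z ∈ interior pentagon.carrier)
    (hgz : mirror (g z) ∈ interior pentagon.carrier) : g = 1 := by
  obtain ⟨⟨hp, hp'⟩, hq, hq'⟩ := hg.index_mem_Ioo (i := true) (j := true) hz hgz
  obtain ⟨a0, a1, a2, a3, a4⟩ := pos_of_mirror_mem_interior_pentagon hz
  obtain ⟨b0, b1, b2, b3, b4⟩ := pos_of_mirror_mem_interior_pentagon hgz
  rw [(hg z).1, (hg z).2] at b0 b1 b2 b3 b4
  suffices p = 0 ∧ q = 0 by
    obtain ⟨rfl, rfl⟩ := this
    exact hg.eq_one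
  interval_cases p <;> interval_cases q <;> norm_num at b0 b1 b2 b3 b4 ⊢ <;> linarith

lemma IsGlide.mirror_notMem_interior (hg : IsGlide p q g) (hz : z ∈ interior pentagon.carrier) :
    mirror (g z) ∉ interior pentagon.carrier := by
  intro hgz
  obtain ⟨⟨hp, hp'⟩, hq, hq'⟩ := hg.index_mem_Ioo (i := false) (j := true) hz hgz
  obtain ⟨a0, a1, a2, a3, a4⟩ := pos_of_mem_interior_pentagon hz
  obtain ⟨b0, b1, b2, b3, b4⟩ := pos_of_mirror_mem_interior_pentagon hgz
  rw [(hg z).1, (hg z).2] at b0 b1 b2 b3 b4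
  interval_cases p <;> interval_cases q <;> norm_num at b0 b1 b2 b3 b4 <;> linarith

lemma eq_one_of_pairPlacement_mem_interior (hg : g ∈ pgg) {i j : Bool}
    (hi : pairPlacement i z ∈ interior pentagon.carrier)
    (hj : pairPlacement j (g z) ∈ interior pentagon.carrier) : g = 1 ∧ i = j := by
  obtain ⟨p', q', hg'⟩ := pgg.inv_mem hg
  obtain ⟨p, q, hg⟩ := hg
  cases i <;> cases j
  · exact ⟨hg.eq_one_of_mem_interior hi hj, rfl⟩
  · exact absurd hj (hg.mirror_notMem_interior hi)
  · refine absurd ?_ (hg'.mirror_notMem_interior hj)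
    exact (IsometryEquiv.inv_apply_self g z).symm ▸ hi
  · exact ⟨hg.eq_one_of_mirror_mem_interior hi hj, rfl⟩

end Disjoint

lemma exists_isGlide_mem_Icc (z : Plane) :
    ∃ p q g, IsGlide p q g ∧ hexX (g z) ∈ Set.Icc (-9) 9 ∧ hexY (g z) ∈ Set.Icc (-6) 6 := by
  obtain ⟨g, hg⟩ := exists_isGlide (round (hexX z / 18)) (round (hexY z / 12))
  refine ⟨_, _, g, hg, abs_le.1 ?_, abs_le.1 ?_⟩
  · rw [(hg z).1, abs_mul, abs_neg_one_zpow, one_mul]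
    have := abs_sub_round (hexX z / 18)
    rw [abs_le] at this ⊢
    constructor <;> linarith
  · rw [(hg z).2, abs_mul, abs_neg_one_zpow, one_mul]
    have := abs_sub_round (hexY z / 12)
    rw [abs_le] at this ⊢
    constructor <;> linarith

lemma exists_pairPlacement_mem {z : Plane} {x y : ℝ} (p q : ℤ)
    (hx : (-1) ^ q * (hexX z - 18 * p) = x) (hy : (-1) ^ p * (hexY z - 12 * q) = y)
    (h0 : 0 ≤ x + 5 * y + 7) (h1 : 0 ≤ -x + 2 * y + 14) (h2 : 0 ≤ -3 * x - y + 49)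
    (h3 : 0 ≤ x - 5 * y + 21) (h4 : 0 ≤ x - y + 1) :
    ∃ g ∈ pgg, ∃ i, pairPlacement i (g z) ∈ pentagon.carrier := by
  obtain ⟨g, hg⟩ := exists_isGlide p q
  rw [← (hg z).1] at hx
  rw [← (hg z).2] at hy
  subst hx hy
  exact ⟨g, ⟨p, q, hg⟩, false, mem_pentagon_iff.2 ⟨h0, h1, h2, h3, h4⟩⟩

lemma exists_pairPlacement_mem_of_mirror {z : Plane} {x y : ℝ} (p q : ℤ)
    (hx : (-1) ^ q * (hexX z - 18 * p) = x) (hy : (-1) ^ p * (hexY z - 12 * q) = y)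
    (h0 : 0 ≤ x + 2 * y + 4) (h1 : 0 ≤ 3 * x - y + 33) (h2 : 0 ≤ x - 5 * y + 53)
    (h3 : 0 ≤ -3 * x - y + 17) (h4 : 0 ≤ -x + y - 1) :
    ∃ g ∈ pgg, ∃ i, pairPlacement i (g z) ∈ pentagon.carrier := by
  obtain ⟨g, hg⟩ := exists_isGlide p q
  rw [← (hg z).1] at hx
  rw [← (hg z).2] at hy
  subst hx hy
  exact ⟨g, ⟨p, q, hg⟩, true, mirror_mem_pentagon h0 h1 h2 h3 h4⟩

lemma exists_pairPlacement_mem_of_mem_Icc {z : Plane} (hX : hexX z ∈ Set.Icc (-9) 9)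
    (hY : hexY z ∈ Set.Icc (-6) 6) :
    ∃ g ∈ pgg, ∃ i, pairPlacement i (g z) ∈ pentagon.carrier := by
  obtain ⟨hX0, hX1⟩ := hX
  obtain ⟨hY0, hY1⟩ := hY
  have direct {x y : ℝ} (p q : ℤ) := exists_pairPlacement_mem (z := z) (x := x) (y := y) p q
  have mirrored {x y : ℝ} (p q : ℤ) :=
    exists_pairPlacement_mem_of_mirror (z := z) (x := x) (y := y) p q
  -- Three pentagons and three mirror images cover the rectangle; the case distinctions are along
  -- the lines containing the sides at which they meet.
  rcases le_total (2 * hexY z + 14) (hexX z) with h0 | h0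
  · rcases le_total (7 - hexY z / 3) (hexX z) with h1 | h1
    · refine mirrored 1 0 (x := hexX z - 18) (y := -hexY z) ?_ ?_ ?_ ?_ ?_ ?_ ?_ <;>
        norm_num <;> linarith
    · refine mirrored 0 (-1) (x := -hexX z) (y := hexY z + 12) ?_ ?_ ?_ ?_ ?_ ?_ ?_ <;>
        norm_num <;> linarith
  · rcases le_total (hexY z - 1) (hexX z) with h1 | h1
    · rcases le_total (-5 * hexY z - 7) (hexX z) with h2 | h2
      · rcases le_total (5 * hexY z - 21) (hexX z) with h3 | h3
        · refine direct 0 0 (x := hexX z) (y := hexY z) ?_ ?_ ?_ ?_ ?_ ?_ ?_ <;>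
            norm_num <;> linarith
        · refine direct 1 1 (x := 18 - hexX z) (y := 12 - hexY z) ?_ ?_ ?_ ?_ ?_ ?_ ?_ <;>
            norm_num <;> linarith
      · rcases le_total ((hexY z - 5) / 3) (hexX z) with h3 | h3
        · refine mirrored 0 (-1) (x := -hexX z) (y := hexY z + 12) ?_ ?_ ?_ ?_ ?_ ?_ ?_ <;>
            norm_num <;> linarith
        · refine direct (-1) 0 (x := hexX z + 18) (y := -hexY z) ?_ ?_ ?_ ?_ ?_ ?_ ?_ <;>
            norm_num <;> linarith
    · rcases le_total (-2 * hexY z - 4) (hexX z) with h2 | h2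
      · rcases le_total ((17 - hexY z) / 3) (hexX z) with h3 | h3
        · refine direct 1 1 (x := 18 - hexX z) (y := 12 - hexY z) ?_ ?_ ?_ ?_ ?_ ?_ ?_ <;>
            norm_num <;> linarith
        · refine mirrored 0 0 (x := hexX z) (y := hexY z) ?_ ?_ ?_ ?_ ?_ ?_ ?_ <;>
            norm_num <;> linarith
      · refine direct (-1) 0 (x := hexX z + 18) (y := -hexY z) ?_ ?_ ?_ ?_ ?_ ?_ ?_ <;>
          norm_num <;> linarith

theorem isMonohedralTiling_pentagon :
    IsMonohedralTiling pentagon.carrier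
      {t | ∃ g ∈ pgg, ∃ i, t = (pairPlacement i * g) ⁻¹' pentagon.carrier} := by
  refine isMonohedralTiling_orbit pgg pairPlacement (fun z ↦ ?_)
    fun g hg i j z ↦ eq_one_of_pairPlacement_mem_interior hg
  obtain ⟨p, q, g, hg, hX, hY⟩ := exists_isGlide_mem_Icc z
  obtain ⟨h, hh, i, hi⟩ := exists_pairPlacement_mem_of_mem_Icc hX hY
  exact ⟨h * g, pgg.mul_mem hh ⟨p, q, hg⟩, i, hi⟩

theorem not_isIsohedral_of_isMonohedralTiling_pentagon {T : Set (Set Plane)}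
    (hT : IsMonohedralTiling pentagon.carrier T) : ¬ IsIsohedral T := by
  intro hiso
  have hangle : ∀ x ∈ pentagon.carrier, ∃ θ, HasAngleAt pentagon.carrier x θ := fun _ hx ↦
    (isSideSystem_vertex.exists_hasAngleAt hx).imp fun _ ↦ And.left
  choose! θ hθ using hangle
  have h4 : vertex 4 ∈ pentagon.carrier := subset_convexHull ℝ _ (Set.mem_range_self 4)
  have hθ4 : θ (vertex 4) = pentagon.angle 4 :=
    (hθ _ h4).unique (isSideSystem_vertex.hasAngleAt_vertex 4)
  obtain ⟨m, X, hX, h4X, hsum⟩ := hT.exists_mul_sum_angle_eq hiso isAsymmetric_pentagon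
    isCompact_pentagon volume_frontier_pentagon hθ h4 (hθ4 ▸ (pentagon_angle_pos 4).ne')
  obtain ⟨k, hk⟩ := isSideSystem_vertex.exists_sum_angle_eq hX hθ
  exact mul_sum_angle_ne_two_pi (Finset.mem_filter.2 ⟨Finset.mem_univ 4, h4X⟩) m k (hk ▸ hsum)

/-- there exists a convex pentagon that is an anisohedral tile:
it admits a monohedral tiling of the plane but no isohedral one. -/
theorem statement_18 :
    ∃ P : ConvexPentagon,
      (∃ T : Set (Set Plane), IsMonohedralTiling P.carrier T) ∧
      ¬ ∃ T : Set (Set Plane), IsMonohedralTiling P.carrier T ∧ IsIsohedral T := by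
  exact ⟨pentagon, ⟨_, isMonohedralTiling_pentagon⟩,
    fun ⟨_, hT, hiso⟩ ↦ not_isIsohedral_of_isMonohedralTiling_pentagon hT hiso⟩
end
end

section
/- No convex polygon with at least seven vertices admits a monohedral tiling of the Euclidean plane. -/
open EuclideanGeometry

noncomputable section

/-!
Fix a linear form `f` that separates the finitely many vertices under consideration, and let `u`
span its kernel. As a discrete substitute for the interior angle at a point `x` of a convex tile,
count how many of the directions `u` and `-u` point from `x` into the tile. The tiles around a point
have total angle at most `2`, and the angle is at least `1` except at the two vertices where `f` is
extremal on the tile. So a tile with `n` vertices has angle sum at least `n - 2`, and the sum of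
`3 * angle - 2` over its vertices is at least `n - 6`. On the other hand a vertex lies in at least
three tiles, and the sum of `3 * angle - 2` over the tiles having a vertex at a given point is at
most `0`. If all tiles had at least seven vertices, these two estimates, weighted by the tent
function of a ball of large radius `R`, would contradict each other: the gain is of order `R ^ 3`,
whereas the error, coming from the variation of the weight within the tiles, is of order `R ^ 2`.
-/

section ConvexSets

open Filter Topology Set

variable {E : Type*} [AddCommGroup E] [Module ℝ E] {s t : Set E} {x u v : E}

theorem notMem_extremePoints_of_add_mem_of_sub_mem (hv : v ≠ 0) (hadd : x + v ∈ t)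
    (hsub : x - v ∈ t) : x ∉ t.extremePoints ℝ := fun hx =>
  hv <| add_eq_left.1 <|
    hx.2 hadd hsub ⟨1 / 2, 1 / 2, by norm_num, by norm_num, by norm_num, by module⟩

variable [TopologicalSpace E] [IsTopologicalAddGroup E] [ContinuousSMul ℝ E]

theorem eventually_add_smul_mem (hs : s ∈ 𝓝 x) (d : E) : ∀ᶠ ε in 𝓝[>] (0 : ℝ), x + ε • d ∈ s := by
  have hcont : Continuous fun ε : ℝ => x + ε • d := by fun_prop
  exact (hcont.tendsto' 0 x (by simp)).mono_left nhdsWithin_le_nhds hs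

theorem subset_of_interior_subset (ht : Convex ℝ t) (hti : (interior t).Nonempty)
    (hs : IsClosed s) (h : interior t ⊆ s) : t ⊆ s :=
  calc t ⊆ closure t := subset_closure
    _ = closure (interior t) := (ht.closure_interior_eq_closure_of_nonempty_interior hti).symm
    _ ⊆ s := closure_minimal h hs

/-- The segment from `x` in direction `d` immediately enters the interior of `t`. -/
def PointsInto (t : Set E) (x d : E) : Prop :=
  ∀ᶠ ε in 𝓝[>] (0 : ℝ), x + ε • d ∈ interior t

theorem pointsInto_of_mem_interior (hx : x ∈ interior t) (d : E) : PointsInto t x d :=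
  eventually_add_smul_mem (isOpen_interior.mem_nhds hx) d

theorem pointsInto_of_add_smul_mem_interior (ht : Convex ℝ t) (hx : x ∈ t) {c : ℝ} (hc : 0 < c)
    {d : E} (h : x + c • d ∈ interior t) : PointsInto t x d := by
  filter_upwards [Ioo_mem_nhdsGT hc] with ε hε
  have hmem := ht.add_smul_sub_mem_interior hx h
    (t := ε / c) ⟨div_pos hε.1 hc, (div_le_one hc).2 hε.2.le⟩
  rwa [add_sub_cancel_left, smul_smul, div_mul_cancel₀ _ hc.ne'] at hmem

/-- The line through `x` along `u` is a level set of `f`; if it misses the interior of `t`, which is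
connected, then `t` lies on one side of it. -/
theorem isExtrOn_of_not_pointsInto (ht : Convex ℝ t) (hti : (interior t).Nonempty)
    {f : StrongDual ℝ E} (hu : f.ker ≤ ℝ ∙ u) (hx : x ∈ t) (hpos : ¬PointsInto t x u)
    (hneg : ¬PointsInto t x (-u)) : IsExtrOn f t x := by
  have hne : ∀ y ∈ interior t, f y ≠ f x := by
    intro y hy hyx
    obtain ⟨c, hc⟩ := Submodule.mem_span_singleton.1 (hu (x := y - x) (by simp [hyx]))
    obtain rfl : y = x + c • u := by simp [hc]
    rcases lt_trichotomy c 0 with h | rfl | h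
    · exact hneg (pointsInto_of_add_smul_mem_interior ht hx (neg_pos.2 h) (by simpa using hy))
    · exact hpos (pointsInto_of_mem_interior (by simpa using hy) u)
    · exact hpos (pointsInto_of_add_smul_mem_interior ht hx h hy)
  by_cases hlow : ∃ y ∈ interior t, f y < f x
  · obtain ⟨y, hy, hyx⟩ := hlow
    refine Or.inr (subset_of_interior_subset ht hti
      (isClosed_le f.continuous continuous_const) fun z hz => not_lt.1 fun hzx : f x < f z => ?_)
    obtain ⟨w, hw, hwx⟩ := ht.interior.isPreconnected.intermediate_value hy hz
      f.continuous.continuousOn ⟨hyx.le, hzx.le⟩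
    exact hne w hw hwx
  · push Not at hlow
    exact Or.inl (subset_of_interior_subset ht hti
      (isClosed_le continuous_const f.continuous) hlow)

theorem mem_extremePoints_of_isMaxOn [T2Space E] [LocallyConvexSpace ℝ E] (ht : Convex ℝ t)
    (htc : IsCompact t) {f : StrongDual ℝ E} (hf : InjOn f (t.extremePoints ℝ)) (hx : x ∈ t)
    (hmax : IsMaxOn f t x) : x ∈ t.extremePoints ℝ := by
  have hface : IsExposed ℝ t (f.toExposed t) := ContinuousLinearMap.toExposed.isExposed
  have hxF : x ∈ f.toExposed t := ⟨hx, hmax⟩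
  have hsub : (f.toExposed t).extremePoints ℝ ⊆ t.extremePoints ℝ :=
    hface.isExtreme.extremePoints_subset_extremePoints
  obtain ⟨e, he⟩ := (hface.isCompact htc).extremePoints_nonempty ⟨x, hxF⟩
  have huniq : (f.toExposed t).extremePoints ℝ = {e} :=
    eq_singleton_iff_unique_mem.2 ⟨he, fun y hy => hf (hsub hy) (hsub he) <|
      le_antisymm (he.1.2 y hy.1.1) (hy.1.2 e he.1.1)⟩
  have hKM := closure_convexHull_extremePoints (hface.isCompact htc) (hface.convex ht)
  rw [huniq, convexHull_singleton, closure_singleton] at hKM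
  obtain rfl : x = e := by rwa [← hKM] at hxF
  exact hsub he

theorem mem_extremePoints_of_isExtrOn [T2Space E] [LocallyConvexSpace ℝ E] (ht : Convex ℝ t)
    (htc : IsCompact t) {f : StrongDual ℝ E} (hf : InjOn f (t.extremePoints ℝ)) (hx : x ∈ t)
    (hextr : IsExtrOn f t x) : x ∈ t.extremePoints ℝ := by
  rcases hextr with hmin | hmax
  · have hf' : InjOn (-f) (t.extremePoints ℝ) := fun a ha b hb hab => hf ha hb (by simpa using hab)
    exact mem_extremePoints_of_isMaxOn ht htc hf' hx hmin.neg
  · exact mem_extremePoints_of_isMaxOn ht htc hf hx hmax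

theorem mem_of_le_of_union_mem_nhds {g : StrongDual ℝ E} {c : ℝ} (hs : ∀ z ∈ s, g z ≤ c)
    (ht : IsClosed t) {p : E} (hp : 0 < g p) (hx : c ≤ g x) (hst : t ∪ s ∈ 𝓝 x) : x ∈ t := by
  have hlim : Tendsto (fun ε : ℝ => x + ε • p) (𝓝[>] 0) (𝓝 x) := fun _ h =>
    eventually_add_smul_mem h p
  refine ht.mem_of_tendsto hlim ?_
  filter_upwards [eventually_add_smul_mem hst p, self_mem_nhdsWithin] with ε hε hpos
  refine hε.resolve_right fun hεs => ?_
  have hle := hs _ hεs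
  rw [map_add, map_smul, smul_eq_mul] at hle
  linarith [mul_pos hpos hp]

/-- The two sets are separated by a hyperplane `g = c`, so near `x` the set `t` is the whole
half-space `c ≤ g`; its extreme points cannot lie there, since `g` has a nontrivial kernel. -/
theorem notMem_extremePoints_of_union_mem_nhds (hE : 1 < Module.rank ℝ E) (ht : Convex ℝ t)
    (hti : (interior t).Nonempty) (htc : IsClosed t) (hs : Convex ℝ s)
    (hsi : (interior s).Nonempty) (hdisj : Disjoint (interior t) (interior s))
    (hst : t ∪ s ∈ 𝓝 x) : x ∉ t.extremePoints ℝ := by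
  intro hx
  obtain ⟨g, c, hgs, hgt⟩ := geometric_hahn_banach_open_open hs.interior isOpen_interior
    ht.interior isOpen_interior hdisj.symm
  have hs_le : ∀ z ∈ s, g z ≤ c := subset_of_interior_subset hs hsi
    (isClosed_le g.continuous continuous_const) fun z hz => (hgs z hz).le
  have ht_ge : ∀ z ∈ t, c ≤ g z := subset_of_interior_subset ht hti
    (isClosed_le continuous_const g.continuous) fun z hz => (hgt z hz).le
  obtain ⟨p, hp⟩ : ∃ p, 0 < g p := by
    obtain ⟨a, ha⟩ := hsi
    obtain ⟨b, hb⟩ := hti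
    exact ⟨b - a, by rw [map_sub]; linarith [hgs a ha, hgt b hb]⟩
  obtain ⟨v, hgv, hv⟩ : ∃ v ∈ g.ker, v ≠ 0 := by
    refine Submodule.exists_mem_ne_zero_of_ne_bot fun hker => hE.not_ge ?_
    simpa using LinearMap.lift_rank_le_of_injective (g : E →ₗ[ℝ] ℝ) (LinearMap.ker_eq_bot.1 hker)
  have hmem : ∀ w ∈ g.ker, ∀ᶠ ε in 𝓝[>] (0 : ℝ), x + ε • w ∈ t := fun w hw => by
    filter_upwards [eventually_add_smul_mem (eventually_mem_nhds_iff.2 hst) w] with ε hε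
    have hgw : g w = 0 := hw
    exact mem_of_le_of_union_mem_nhds hs_le htc hp (by simpa [hgw] using ht_ge x hx.1) hε
  obtain ⟨ε, ⟨hadd, hsub⟩, hε⟩ :=
    ((hmem v hgv).and (hmem (-v) (neg_mem hgv))).and self_mem_nhdsWithin |>.exists
  rw [smul_neg, ← sub_eq_add_neg] at hsub
  exact notMem_extremePoints_of_add_mem_of_sub_mem (smul_ne_zero (ne_of_gt hε) hv) hadd hsub hx

end ConvexSets

section DirectionAngle

open Filter Topology Set

variable {E : Type*} [AddCommGroup E] [Module ℝ E] [TopologicalSpace E] {t : Set E} {x u : E}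
  {A : Finset (Set E)}

/-- A tile: a compact convex set with nonempty interior. -/
structure IsConvexTile (t : Set E) : Prop where
  convex : Convex ℝ t
  isCompact : IsCompact t
  interior_nonempty : (interior t).Nonempty

open Classical in
/-- The number of directions among `u` and `-u` that point from `x` into `t`. Averaged over the
directions `u` of the plane this is the angle of `t` at `x` divided by `π`; a single generic `u`
serves just as well as the angle itself in Euler-type counting arguments. -/
def directionAngle (u : E) (t : Set E) (x : E) : ℝ :=
  (if PointsInto t x u then 1 else 0) + (if PointsInto t x (-u) then 1 else 0)

theorem directionAngle_nonneg (u : E) (t : Set E) (x : E) : 0 ≤ directionAngle u t x := by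
  unfold directionAngle
  split_ifs <;> norm_num

open Classical in
theorem card_filter_pointsInto_le_one (hA : (A : Set (Set E)).PairwiseDisjoint interior) (x d : E) :
    (A.filter (PointsInto · x d)).card ≤ 1 := by
  refine Finset.card_le_one.2 fun t ht s hs => ?_
  rw [Finset.mem_filter] at ht hs
  obtain ⟨ε, hεt, hεs⟩ := (ht.2.and hs.2).exists
  exact hA.elim_set ht.1 hs.1 _ hεt hεs

theorem sum_directionAngle_le_two (hA : (A : Set (Set E)).PairwiseDisjoint interior) (u x : E) :
    ∑ t ∈ A, directionAngle u t x ≤ 2 := by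
  classical
  have hle (d : E) : ∑ t ∈ A, (if PointsInto t x d then (1 : ℝ) else 0) ≤ 1 := by
    rw [Finset.sum_boole]
    exact_mod_cast card_filter_pointsInto_le_one hA x d
  simp only [directionAngle, Finset.sum_add_distrib]
  linarith [hle u, hle (-u)]

open Classical in
theorem card_filter_isExtrOn_le_two {α : Type*} {t : Set α} {V : Finset α} (hV : ↑V ⊆ t)
    {f : α → ℝ} (hf : InjOn f V) : (V.filter (IsExtrOn f t)).card ≤ 2 := by
  have hmin : (V.filter (IsMinOn f t)).card ≤ 1 := Finset.card_le_one.2 fun a ha b hb => by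
    rw [Finset.mem_filter] at ha hb
    exact hf ha.1 hb.1 (le_antisymm (ha.2 (hV hb.1)) (hb.2 (hV ha.1)))
  have hmax : (V.filter (IsMaxOn f t)).card ≤ 1 := Finset.card_le_one.2 fun a ha b hb => by
    rw [Finset.mem_filter] at ha hb
    exact hf ha.1 hb.1 (le_antisymm (hb.2 (hV ha.1)) (ha.2 (hV hb.1)))
  calc (V.filter (IsExtrOn f t)).card
      ≤ (V.filter (IsMinOn f t) ∪ V.filter (IsMaxOn f t)).card :=
        Finset.card_le_card fun v hv => by
          obtain ⟨hv, hextr⟩ := Finset.mem_filter.1 hv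
          simp only [Finset.mem_union, Finset.mem_filter, hv, true_and]
          exact hextr
    _ ≤ (V.filter (IsMinOn f t)).card + (V.filter (IsMaxOn f t)).card := Finset.card_union_le _ _
    _ ≤ 2 := by omega

variable [IsTopologicalAddGroup E] [ContinuousSMul ℝ E] {f : StrongDual ℝ E}

theorem one_le_directionAngle (ht : Convex ℝ t) (hti : (interior t).Nonempty)
    (hu : f.ker ≤ ℝ ∙ u) (hx : x ∈ t) (hextr : ¬IsExtrOn f t x) : 1 ≤ directionAngle u t x := by
  unfold directionAngle
  split_ifs with hpos hneg hneg <;> try norm_num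
  exact hextr (isExtrOn_of_not_pointsInto ht hti hu hx hpos hneg)

/-- At most two vertices are extremal for `f`. Each of these contributes at least `-2`, each of the
at least five others at least `1`, up to the weight. -/
theorem sub_le_sum_mul_directionAngle (ht : Convex ℝ t) (hti : (interior t).Nonempty)
    (hu : f.ker ≤ ℝ ∙ u) {V : Finset E} (hV : ↑V ⊆ t) (hf : InjOn f V) (hcard : 7 ≤ V.card)
    {w : E → ℝ} (hw : ∀ v ∈ V, 0 ≤ w v) {m δ : ℝ} (hm : 0 ≤ m) (hmw : ∀ v ∈ V, |w v - m| ≤ δ) :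
    m - 9 * δ ≤ ∑ v ∈ V, w v * (3 * directionAngle u t v - 2) := by
  classical
  obtain ⟨v₀, hv₀⟩ : V.Nonempty := Finset.card_pos.1 (by omega)
  have hδ : 0 ≤ δ := (abs_nonneg _).trans (hmw v₀ hv₀)
  set B := V.filter (IsExtrOn f t)
  set C := V.filter (¬IsExtrOn f t ·)
  have hBcard : (B.card : ℝ) ≤ 2 := mod_cast card_filter_isExtrOn_le_two hV hf
  have hBC : (7 : ℝ) ≤ B.card + C.card := by
    exact_mod_cast hcard.trans_eq (Finset.card_filter_add_card_filter_not _).symm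
  have hB : B.card * (-2 * (m + δ)) ≤ ∑ v ∈ B, w v * (3 * directionAngle u t v - 2) := by
    rw [← nsmul_eq_mul]
    refine Finset.card_nsmul_le_sum _ _ _ fun v hv => ?_
    have hvV := Finset.filter_subset _ _ hv
    nlinarith [hw v hvV, (abs_le.1 (hmw v hvV)).2, directionAngle_nonneg u t v]
  have hC : C.card * max 0 (m - δ) ≤ ∑ v ∈ C, w v * (3 * directionAngle u t v - 2) := by
    rw [← nsmul_eq_mul]
    refine Finset.card_nsmul_le_sum _ _ _ fun v hv => ?_
    obtain ⟨hvV, hextr⟩ := Finset.mem_filter.1 hv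
    have hone := one_le_directionAngle ht hti hu (hV hvV) hextr
    have hmax : max 0 (m - δ) ≤ w v :=
      max_le (hw v hvV) (by linarith [(abs_le.1 (hmw v hvV)).1])
    exact hmax.trans (le_mul_of_one_le_right (hw v hvV) (by linarith))
  rw [← Finset.sum_filter_add_sum_filter_not V (IsExtrOn f t)]
  have h5 : (5 : ℝ) * max 0 (m - δ) ≤ C.card * max 0 (m - δ) := by gcongr; linarith
  have h2 : (B.card : ℝ) * (m + δ) ≤ 2 * (m + δ) := by gcongr
  linarith [le_max_right 0 (m - δ)]

theorem three_le_card_of_mem_extremePoints [T2Space E] (hE : 1 < Module.rank ℝ E)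
    (hT : ∀ t ∈ A, IsConvexTile t) (hA : (A : Set (Set E)).PairwiseDisjoint interior)
    (hnhds : ⋃₀ (A : Set (Set E)) ∈ 𝓝 x) (ht : t ∈ A) (hx : x ∈ t.extremePoints ℝ) :
    3 ≤ A.card := by
  classical
  by_contra! hlt
  have herase : (A.erase t).card ≤ 1 := by rw [Finset.card_erase_of_mem ht]; omega
  rw [← Finset.insert_erase ht] at hnhds
  rcases Finset.card_le_one_iff_subset_singleton.1 herase with ⟨s, hs⟩
  rcases Finset.subset_singleton_iff.1 hs with h | h
  · have : Nontrivial E := rank_pos_iff_nontrivial.1 (one_pos.trans hE)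
    rw [h] at hnhds
    exact (disjoint_interior_extremePoints t).notMem_of_mem_right hx
      (mem_interior_iff_mem_nhds.2 (by simpa using hnhds))
  · have hsA : s ∈ A.erase t := h ▸ Finset.mem_singleton_self s
    obtain ⟨hst, hsA⟩ := Finset.mem_erase.1 hsA
    rw [h] at hnhds
    exact notMem_extremePoints_of_union_mem_nhds hE (hT t ht).convex (hT t ht).interior_nonempty
      (hT t ht).isCompact.isClosed (hT s hsA).convex (hT s hsA).interior_nonempty
      (hA ht hsA hst.symm) (by simpa using hnhds) hx

open Classical in
/-- Of the `k + m ≥ 3` tiles around `x`, let `k` have `x` as a vertex. The other `m` use up an angle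
of at least `m` out of `2`, which leaves at most `2 - m ≤ 2 * k / 3` unless `m ≥ 2`, and then
nothing. -/
theorem sum_directionAngle_sub_le_zero [T2Space E] [LocallyConvexSpace ℝ E]
    (hE : 1 < Module.rank ℝ E) (hT : ∀ t ∈ A, IsConvexTile t)
    (hA : (A : Set (Set E)).PairwiseDisjoint interior) (hxA : ∀ t ∈ A, x ∈ t)
    (hnhds : ⋃₀ (A : Set (Set E)) ∈ 𝓝 x) (hu : f.ker ≤ ℝ ∙ u)
    (hf : ∀ t ∈ A, InjOn f (t.extremePoints ℝ)) :
    ∑ t ∈ A with x ∈ t.extremePoints ℝ, (3 * directionAngle u t x - 2) ≤ 0 := by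
  set K := A.filter (x ∈ ·.extremePoints ℝ)
  set M := A.filter (x ∉ ·.extremePoints ℝ)
  rcases K.eq_empty_or_nonempty with hKe | ⟨t, htK⟩
  · simp [hKe]
  have hcard : (3 : ℝ) ≤ K.card + M.card := by
    obtain ⟨htA, hx⟩ := Finset.mem_filter.1 htK
    exact_mod_cast (three_le_card_of_mem_extremePoints hE hT hA hnhds htA hx).trans_eq
      (Finset.card_filter_add_card_filter_not _).symm
  have htotal : ∑ t ∈ K, directionAngle u t x + ∑ t ∈ M, directionAngle u t x ≤ 2 :=
    (Finset.sum_filter_add_sum_filter_not A _ _).trans_le (sum_directionAngle_le_two hA u x)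
  have hM : (M.card : ℝ) ≤ ∑ t ∈ M, directionAngle u t x := by
    rw [← nsmul_one]
    refine Finset.card_nsmul_le_sum _ _ _ fun t ht => ?_
    obtain ⟨htA, hx⟩ := Finset.mem_filter.1 ht
    have htile := hT t htA
    exact one_le_directionAngle htile.convex htile.interior_nonempty hu (hxA t htA) fun hextr =>
      hx (mem_extremePoints_of_isExtrOn htile.convex htile.isCompact (hf t htA) (hxA t htA) hextr)
  rw [Finset.sum_sub_distrib, ← Finset.mul_sum, Finset.sum_const, nsmul_eq_mul]
  rcases Nat.lt_or_ge M.card 2 with h2 | h2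
  · have : (M.card : ℝ) ≤ 1 := mod_cast Nat.lt_succ_iff.1 h2
    linarith
  · have : (2 : ℝ) ≤ M.card := mod_cast h2
    linarith [K.card.cast_nonneg (α := ℝ)]

end DirectionAngle

section GenericForm

theorem exists_strongDual_injOn_ker_le_span {E : Type*} [NormedAddCommGroup E] [NormedSpace ℝ E]
    (hE : Module.finrank ℝ E = 2) {S : Set E} (hS : S.Finite) :
    ∃ (f : StrongDual ℝ E) (u : E), Set.InjOn f S ∧ f.ker ≤ ℝ ∙ u := by
  have : FiniteDimensional ℝ E := .of_finrank_pos (by omega)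
  have : Nontrivial E := Module.nontrivial_of_finrank_pos (R := ℝ) (by omega)
  obtain ⟨e, he⟩ := exists_ne (0 : E)
  let D : Set E := insert e ((fun p : E × E => p.1 - p.2) '' S.offDiag)
  have hD : Finite D := (((hS.offDiag).image _).insert e).to_subtype
  obtain ⟨f, hf⟩ := Module.exists_dual_forall_apply_ne_zero (K := ℝ) (fun d : D => (d : E)) <| by
    rintro ⟨_, hd | ⟨⟨a, b⟩, hab, rfl⟩⟩
    · exact hd.trans_ne he
    · exact sub_ne_zero.2 hab.2.2
  have hf0 : f ≠ 0 := fun h => hf ⟨e, Set.mem_insert _ _⟩ (by simp [h])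
  have hker : Module.finrank ℝ f.ker = 1 := by
    have := Module.Dual.finrank_ker_add_one_of_ne_zero hf0
    omega
  obtain ⟨u, -, hu⟩ := finrank_eq_one_iff'.1 hker
  refine ⟨f.toContinuousLinearMap, u, fun a ha b hb hab => ?_, fun y hy => ?_⟩
  · by_contra hne
    refine hf ⟨a - b, Set.mem_insert_of_mem _ ⟨(a, b), ⟨ha, hb, hne⟩, rfl⟩⟩ ?_
    rw [map_sub, sub_eq_zero]
    exact hab
  · obtain ⟨c, hc⟩ := hu ⟨y, hy⟩
    exact Submodule.mem_span_singleton.2 ⟨c, congrArg Subtype.val hc⟩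

end GenericForm

section Counting

open MeasureTheory

variable {ι α : Type*} [MeasurableSpace α] {μ : Measure α} {F : Finset ι} {s : ι → Set α}
  {B : Set α}

theorem card_mul_le_measureReal (hB : μ B ≠ ⊤) (hdisj : (F : Set ι).PairwiseDisjoint s)
    (hmeas : ∀ i ∈ F, MeasurableSet (s i)) (hsub : ∀ i ∈ F, s i ⊆ B) {a : ℝ}
    (ha : ∀ i ∈ F, a ≤ μ.real (s i)) : F.card * a ≤ μ.real B :=
  calc F.card * a ≤ ∑ i ∈ F, μ.real (s i) := by
        rw [← nsmul_eq_mul]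
        exact Finset.card_nsmul_le_sum _ _ _ ha
    _ = μ.real (⋃ i ∈ F, s i) := (measureReal_biUnion_finset hdisj hmeas
        fun i hi => measure_ne_top_of_subset (hsub i hi) hB).symm
    _ ≤ μ.real B := measureReal_mono (Set.iUnion₂_subset hsub) hB

theorem measureReal_le_card_mul (hB : B ⊆ ⋃ i ∈ F, s i) (hfin : ∀ i ∈ F, μ (s i) ≠ ⊤) {b : ℝ}
    (hb : ∀ i ∈ F, μ.real (s i) ≤ b) : μ.real B ≤ F.card * b :=
  calc μ.real B ≤ μ.real (⋃ i ∈ F, s i) := measureReal_mono hB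
        (measure_biUnion_lt_top F.finite_toSet fun i hi => (hfin i hi).lt_top).ne
    _ ≤ ∑ i ∈ F, μ.real (s i) := measureReal_biUnion_finset_le F s
    _ ≤ F.card * b := by
        rw [← nsmul_eq_mul]
        exact Finset.sum_le_card_nsmul _ _ _ hb

end Counting

section Tent

variable {E : Type*} [SeminormedAddCommGroup E]

/-- The cone over the ball of radius `R`. Being `1`-Lipschitz, its variation within a tile is
negligible against its size on most tiles when `R` is large. -/
def tent (R : ℝ) (x : E) : ℝ := max 0 (R - ‖x‖)

theorem tent_nonneg (R : ℝ) (x : E) : 0 ≤ tent R x := le_max_left _ _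

theorem sub_norm_le_tent (R : ℝ) (x : E) : R - ‖x‖ ≤ tent R x := le_max_right _ _

theorem tent_eq_zero {R : ℝ} {x : E} (hx : R ≤ ‖x‖) : tent R x = 0 := max_eq_left (by linarith)

theorem abs_tent_sub_tent_le (R : ℝ) (x y : E) : |tent R x - tent R y| ≤ dist x y :=
  calc |tent R x - tent R y| ≤ max |0 - 0| |R - ‖x‖ - (R - ‖y‖)| := abs_max_sub_max_le_max _ _ _ _
    _ = |‖y‖ - ‖x‖| := by simp
    _ ≤ dist x y := by
      rw [dist_comm, dist_eq_norm]
      exact abs_norm_sub_norm_le y x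

end Tent

/-- A normal tiling in the sense of Grünbaum and Shephard, by convex polygons, i.e. compact convex
sets with finitely many extreme points: the areas are bounded below by `a > 0` and the diameters
above by `D`. -/
structure IsNormalTiling (T : Set (Set Plane)) (a D : ℝ) : Prop where
  convex : ∀ t ∈ T, Convex ℝ t
  isCompact : ∀ t ∈ T, IsCompact t
  finite_extremePoints : ∀ t ∈ T, (t.extremePoints ℝ).Finite
  pos : 0 < a
  le_area : ∀ t ∈ T, a ≤ MeasureTheory.volume.real t
  diam_le : ∀ t ∈ T, Metric.diam t ≤ D
  pairwiseDisjoint : T.PairwiseDisjoint interior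
  sUnion_eq_univ : ⋃₀ T = Set.univ

namespace IsNormalTiling

open Filter Topology MeasureTheory Metric Real

variable {T : Set (Set Plane)} {a D R : ℝ} {t : Set Plane} {x p u : Plane}

theorem volume_interior (hT : IsNormalTiling T a D) (ht : t ∈ T) :
    volume (interior t) = volume t :=
  measure_interior_of_null_frontier ((hT.convex t ht).addHaar_frontier volume)

theorem isConvexTile (hT : IsNormalTiling T a D) (ht : t ∈ T) : IsConvexTile t where
  convex := hT.convex t ht
  isCompact := hT.isCompact t ht
  interior_nonempty := by
    refine nonempty_of_measure_ne_zero (μ := volume) fun h => ?_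
    rw [hT.volume_interior ht] at h
    have hle := hT.le_area t ht
    rw [measureReal_def, h, ENNReal.toReal_zero] at hle
    exact hT.pos.not_ge hle

theorem dist_le (hT : IsNormalTiling T a D) (ht : t ∈ T) (hx : x ∈ t) (hp : p ∈ t) :
    dist x p ≤ D :=
  (dist_le_diam_of_mem (hT.isCompact t ht).isBounded hx hp).trans (hT.diam_le t ht)

theorem nonneg (hT : IsNormalTiling T a D) : 0 ≤ D := by
  obtain ⟨t, ht, hx⟩ : (0 : Plane) ∈ ⋃₀ T := hT.sUnion_eq_univ ▸ Set.mem_univ _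
  exact dist_nonneg.trans (hT.dist_le ht hx hx)

theorem subset_ball_add (hT : IsNormalTiling T a D) (ht : t ∈ T) (hR : (t ∩ ball 0 R).Nonempty) :
    t ⊆ ball 0 (R + D) := by
  obtain ⟨p, hp, hpR⟩ := hR
  intro x hx
  rw [mem_ball] at hpR ⊢
  linarith [dist_triangle x p 0, hT.dist_le ht hx hp]

theorem finite_meeting_ball (hT : IsNormalTiling T a D) (R : ℝ) :
    {t ∈ T | (t ∩ ball 0 R).Nonempty}.Finite := by
  set U := {t ∈ T | (t ∩ ball 0 R).Nonempty}
  have hfin := Measure.finite_const_le_meas_of_disjoint_iUnion (volume : Measure Plane)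
    (ε := ENNReal.ofReal a) (ENNReal.ofReal_pos.2 hT.pos) (As := fun t : U => interior t.1)
    (fun t => isOpen_interior.measurableSet)
    (fun t s hts => hT.pairwiseDisjoint t.2.1 s.2.1 fun h => hts (Subtype.ext h))
    (measure_ne_top_of_subset (Set.iUnion_subset fun t : U =>
      interior_subset.trans (hT.subset_ball_add t.2.1 t.2.2)) measure_ball_lt_top.ne)
  have huniv : {t : U | ENNReal.ofReal a ≤ volume (interior t.1)} = Set.univ :=
    Set.eq_univ_of_forall fun t => by
      rw [Set.mem_ofPred_eq, hT.volume_interior t.2.1]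
      exact ENNReal.ofReal_le_of_le_toReal (hT.le_area t.1 t.2.1)
  rw [huniv, Set.finite_univ_iff] at hfin
  exact U.toFinite

/-- The finitely many tiles that meet the open ball of radius `R` about the origin. -/
def tilesMeetingBall (hT : IsNormalTiling T a D) (R : ℝ) : Finset (Set Plane) :=
  (hT.finite_meeting_ball R).toFinset

theorem mem_tilesMeetingBall (hT : IsNormalTiling T a D) :
    t ∈ hT.tilesMeetingBall R ↔ t ∈ T ∧ (t ∩ ball 0 R).Nonempty :=
  Set.Finite.mem_toFinset _

theorem mem_of_mem_tilesMeetingBall (hT : IsNormalTiling T a D)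
    (ht : t ∈ hT.tilesMeetingBall R) : t ∈ T :=
  (hT.mem_tilesMeetingBall.1 ht).1

theorem pairwiseDisjoint_tilesMeetingBall (hT : IsNormalTiling T a D) :
    (hT.tilesMeetingBall R : Set (Set Plane)).PairwiseDisjoint interior :=
  hT.pairwiseDisjoint.subset fun _ => hT.mem_of_mem_tilesMeetingBall

theorem exists_mem_tilesMeetingBall (hT : IsNormalTiling T a D) (hx : x ∈ ball 0 R) :
    ∃ t ∈ hT.tilesMeetingBall R, x ∈ t := by
  obtain ⟨t, ht, hxt⟩ : x ∈ ⋃₀ T := hT.sUnion_eq_univ ▸ Set.mem_univ _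
  exact ⟨t, hT.mem_tilesMeetingBall.2 ⟨ht, x, hxt, hx⟩, hxt⟩

theorem card_tilesMeetingBall_mul_le (hT : IsNormalTiling T a D) (hR : 0 ≤ R) :
    (hT.tilesMeetingBall R).card * a ≤ (R + D) ^ 2 * π := by
  have hcount := card_mul_le_measureReal (μ := volume) (B := ball (0 : Plane) (R + D)) (a := a)
    measure_ball_lt_top.ne hT.pairwiseDisjoint_tilesMeetingBall
    (fun _ _ => isOpen_interior.measurableSet)
    (fun t ht => interior_subset.trans
      (hT.subset_ball_add (hT.mem_of_mem_tilesMeetingBall ht) (hT.mem_tilesMeetingBall.1 ht).2))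
    (fun t ht => by
      rw [measureReal_def, hT.volume_interior (hT.mem_of_mem_tilesMeetingBall ht)]
      exact hT.le_area t (hT.mem_of_mem_tilesMeetingBall ht))
  have hRD : 0 ≤ R + D := add_nonneg hR hT.nonneg
  simpa [measureReal_def, EuclideanSpace.volume_ball_fin_two, hRD, pi_nonneg] using hcount

theorem volumeReal_le (hT : IsNormalTiling T a D) (ht : t ∈ T) : volume.real t ≤ D ^ 2 * π := by
  obtain ⟨p, hp⟩ := (hT.isConvexTile ht).interior_nonempty
  have hsub : t ⊆ closedBall p D := fun x hx => hT.dist_le ht hx (interior_subset hp)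
  have hle := measureReal_mono (μ := volume) hsub measure_closedBall_lt_top.ne
  simpa [measureReal_def, EuclideanSpace.volume_closedBall_fin_two, hT.nonneg, pi_nonneg] using hle

theorem sq_le_card_tilesMeetingBall_mul (hT : IsNormalTiling T a D) (hR : 0 ≤ R) :
    R ^ 2 ≤ (hT.tilesMeetingBall R).card * D ^ 2 := by
  have hcount := measureReal_le_card_mul (μ := volume) (B := ball (0 : Plane) R) (s := id)
    (fun x hx => Set.mem_iUnion₂.2 (by simpa using hT.exists_mem_tilesMeetingBall hx))
    (fun t ht => (hT.isCompact t (hT.mem_of_mem_tilesMeetingBall ht)).measure_lt_top.ne)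
    (fun t ht => hT.volumeReal_le (hT.mem_of_mem_tilesMeetingBall ht))
  rw [measureReal_def, EuclideanSpace.volume_ball_fin_two] at hcount
  have hcount' : R ^ 2 * π ≤ (hT.tilesMeetingBall R).card * D ^ 2 * π := by
    simpa [hR, pi_nonneg, mul_assoc] using hcount
  exact le_of_mul_le_mul_right hcount' pi_pos

open Classical in
theorem sUnion_filter_mem_nhds (hT : IsNormalTiling T a D) (hx : x ∈ ball 0 R) :
    ⋃₀ ((hT.tilesMeetingBall R).filter (x ∈ ·) : Set (Set Plane)) ∈ 𝓝 x := by
  set N := (hT.tilesMeetingBall R).filter (x ∉ ·)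
  have hclosed : IsClosed (⋃ t ∈ N, t) := N.finite_toSet.isClosed_biUnion fun t ht =>
    (hT.isCompact t (hT.mem_of_mem_tilesMeetingBall (Finset.filter_subset _ _ ht))).isClosed
  have hxN : x ∉ ⋃ t ∈ N, t := by simp [N]
  filter_upwards [isOpen_ball.mem_nhds hx, hclosed.isOpen_compl.mem_nhds hxN] with y hyR hyN
  obtain ⟨t, ht, hyt⟩ := hT.exists_mem_tilesMeetingBall hyR
  refine ⟨t, Finset.mem_filter.2 ⟨ht, ?_⟩, hyt⟩
  by_contra hxt
  exact hyN (Set.mem_biUnion (Finset.mem_filter.2 ⟨ht, hxt⟩) hyt)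

variable {f : StrongDual ℝ Plane} {X : Finset Plane}

open Classical in
theorem sum_tent_mul_nonpos (hT : IsNormalTiling T a D) (hu : f.ker ≤ ℝ ∙ u) (hf : Set.InjOn f X)
    (hX : ∀ t ∈ hT.tilesMeetingBall R, t.extremePoints ℝ ⊆ X) :
    ∑ t ∈ hT.tilesMeetingBall R, ∑ v ∈ X with v ∈ t.extremePoints ℝ,
      tent R v * (3 * directionAngle u t v - 2) ≤ 0 := by
  simp_rw [Finset.sum_filter]
  rw [Finset.sum_comm]
  refine Finset.sum_nonpos fun x _ => ?_
  rw [← Finset.sum_filter, ← Finset.mul_sum]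
  rcases le_or_gt R ‖x‖ with hxR | hxR
  · rw [tent_eq_zero hxR, zero_mul]
  refine mul_nonpos_of_nonneg_of_nonpos (tent_nonneg R x) ?_
  set A := (hT.tilesMeetingBall R).filter (x ∈ ·)
  have hAF : A ⊆ hT.tilesMeetingBall R := Finset.filter_subset _ _
  have hfilter : (hT.tilesMeetingBall R).filter (x ∈ ·.extremePoints ℝ) =
      A.filter (x ∈ ·.extremePoints ℝ) := by
    rw [Finset.filter_filter]
    exact Finset.filter_congr fun t _ => ⟨fun h => ⟨h.1, h⟩, And.right⟩
  rw [hfilter]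
  exact sum_directionAngle_sub_le_zero (by simp [← Module.finrank_eq_rank])
    (fun t ht => hT.isConvexTile (hT.mem_of_mem_tilesMeetingBall (hAF ht)))
    (hT.pairwiseDisjoint_tilesMeetingBall.subset hAF) (fun t ht => (Finset.mem_filter.1 ht).2)
    (hT.sUnion_filter_mem_nhds (mem_ball_zero_iff.2 hxR)) hu
    (fun t ht => hf.mono (hX t (hAF ht)))

open Classical in
theorem tent_sub_le_sum (hT : IsNormalTiling T a D) (hu : f.ker ≤ ℝ ∙ u) (hf : Set.InjOn f X)
    (ht : t ∈ T) (hX : t.extremePoints ℝ ⊆ X) (hcard : 7 ≤ (t.extremePoints ℝ).ncard)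
    (hp : p ∈ t) (R : ℝ) :
    tent R p - 9 * D ≤
      ∑ v ∈ X with v ∈ t.extremePoints ℝ, tent R v * (3 * directionAngle u t v - 2) := by
  set V := X.filter (· ∈ t.extremePoints ℝ)
  have hV : (V : Set Plane) = t.extremePoints ℝ := by
    ext v
    simpa [V] using fun hv => hX hv
  have hVt : (V : Set Plane) ⊆ t := hV ▸ extremePoints_subset
  have htile := hT.isConvexTile ht
  exact sub_le_sum_mul_directionAngle htile.convex htile.interior_nonempty hu hVt
    (hf.mono (hV ▸ hX)) (by rwa [← Set.ncard_coe_finset, hV]) (fun v _ => tent_nonneg R v)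
    (tent_nonneg R p) fun v hv => (abs_tent_sub_tent_le R v p).trans (hT.dist_le ht (hVt hv) hp)

theorem card_tilesMeetingBall_half_mul_le (hT : IsNormalTiling T a D)
    (hcard : ∀ t ∈ T, 7 ≤ (t.extremePoints ℝ).ncard) (hR : 0 ≤ R) :
    (hT.tilesMeetingBall (R / 2)).card * (R / 2) ≤ (hT.tilesMeetingBall R).card * (9 * D) := by
  classical
  set F := hT.tilesMeetingBall R
  set G := hT.tilesMeetingBall (R / 2)
  have hGF : G ⊆ F := fun t ht => by
    obtain ⟨htT, hmeet⟩ := hT.mem_tilesMeetingBall.1 ht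
    exact hT.mem_tilesMeetingBall.2 ⟨htT, hmeet.mono
      (Set.inter_subset_inter_right _ (ball_subset_ball (half_le_self hR)))⟩
  have hfin : (⋃ t ∈ F, t.extremePoints ℝ).Finite := F.finite_toSet.biUnion fun t ht =>
    hT.finite_extremePoints t (hT.mem_of_mem_tilesMeetingBall ht)
  set X := hfin.toFinset
  have hX : ∀ t ∈ F, t.extremePoints ℝ ⊆ X := fun t ht => by
    rw [hfin.coe_toFinset]
    exact Set.subset_biUnion_of_mem (u := fun t => t.extremePoints ℝ) ht
  obtain ⟨f, u, hf, hu⟩ := exists_strongDual_injOn_ker_le_span (E := Plane) (by simp)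
    X.finite_toSet
  have htile : ∀ t ∈ F, (if t ∈ G then R / 2 else 0) - 9 * D ≤
      ∑ v ∈ X with v ∈ t.extremePoints ℝ, tent R v * (3 * directionAngle u t v - 2) := by
    intro t ht
    obtain ⟨htT, p, hp, -⟩ := hT.mem_tilesMeetingBall.1 ht
    split_ifs with htG
    · obtain ⟨-, q, hq, hqR⟩ := hT.mem_tilesMeetingBall.1 htG
      have hle := hT.tent_sub_le_sum hu hf htT (hX t ht) (hcard t htT) hq R
      linarith [sub_norm_le_tent R q, mem_ball_zero_iff.1 hqR]
    · have hle := hT.tent_sub_le_sum hu hf htT (hX t ht) (hcard t htT) hp R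
      linarith [tent_nonneg R p]
  have hsum := (Finset.sum_le_sum htile).trans (hT.sum_tent_mul_nonpos hu hf hX)
  rw [Finset.sum_sub_distrib, Finset.sum_ite_mem, Finset.inter_eq_right.2 hGF] at hsum
  simpa using hsum

theorem mul_radius_le (hT : IsNormalTiling T a D)
    (hcard : ∀ t ∈ T, 7 ≤ (t.extremePoints ℝ).ncard) (hR : 0 < R) (hDR : D ≤ R) :
    a * R ≤ 288 * π * D ^ 3 := by
  have ha := hT.pos
  have hD := hT.nonneg
  have hupper := hT.card_tilesMeetingBall_mul_le hR.le
  have hlower := hT.sq_le_card_tilesMeetingBall_mul (half_pos hR).le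
  have hhalf := hT.card_tilesMeetingBall_half_mul_le hcard hR.le
  set F : ℝ := ((hT.tilesMeetingBall R).card : ℝ)
  set G : ℝ := ((hT.tilesMeetingBall (R / 2)).card : ℝ)
  have hcubic : a * R * R ^ 2 ≤ 288 * π * D ^ 3 * R ^ 2 :=
    calc a * R * R ^ 2 = 8 * a * (R / 2) * (R / 2) ^ 2 := by ring
      _ ≤ 8 * a * (R / 2) * (G * D ^ 2) := by gcongr
      _ = 8 * a * D ^ 2 * (G * (R / 2)) := by ring
      _ ≤ 8 * a * D ^ 2 * (F * (9 * D)) := by gcongr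
      _ = 72 * D ^ 3 * (F * a) := by ring
      _ ≤ 72 * D ^ 3 * ((R + D) ^ 2 * π) := by gcongr
      _ ≤ 72 * D ^ 3 * ((R + R) ^ 2 * π) := by gcongr
      _ = 288 * π * D ^ 3 * R ^ 2 := by ring
  exact le_of_mul_le_mul_right hcubic (by positivity)

end IsNormalTiling

section ConvexIndependent

open Set

variable {ι E F : Type*} [AddCommGroup E] [Module ℝ E] [AddCommGroup F] [Module ℝ F] {p : ι → E}

theorem convexIndependent_affineEquiv_comp (g : E ≃ᵃ[ℝ] F) (hp : ConvexIndependent ℝ p) :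
    ConvexIndependent ℝ (g ∘ p) := by
  intro s i hi
  have himage : (g ∘ p) '' s = (g : E →ᵃ[ℝ] F) '' (p '' s) := image_comp g p s
  rw [himage, ← AffineMap.image_convexHull] at hi
  exact hp s i ((g.injective.mem_set_image).1 hi)

theorem not_collinear_of_convexIndependent [Fintype ι] (hp : ConvexIndependent ℝ p)
    (hι : 2 < Fintype.card ι) : ¬Collinear ℝ (range p) := by
  obtain ⟨i, j, k, hij, hik, hjk⟩ := Fintype.two_lt_card_iff.1 hι
  have hnot : ∀ i j k, j ≠ i → j ≠ k → ¬Wbtw ℝ (p i) (p j) (p k) := by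
    intro i j k hji hjk hwbtw
    have hmem := hp {i, k} j (by rwa [image_pair, convexHull_pair, mem_segment_iff_wbtw])
    simp_all
  intro hcol
  have hsub : {p i, p j, p k} ⊆ range p := by rintro x (rfl | rfl | rfl) <;> exact mem_range_self _
  rcases (hcol.subset hsub).wbtw_or_wbtw_or_wbtw with h | h | h
  · exact hnot i j k hij.symm hjk h
  · exact hnot j k i hjk.symm hik.symm h
  · exact hnot k i j hik hij h

theorem extremePoints_convexHull_range [Finite ι] [TopologicalSpace E] [IsTopologicalAddGroup E]
    [ContinuousSMul ℝ E] [T2Space E] [LocallyConvexSpace ℝ E] (hp : ConvexIndependent ℝ p) :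
    (convexHull ℝ (range p)).extremePoints ℝ = range p := by
  refine extremePoints_convexHull_subset.antisymm ?_
  rintro _ ⟨i, rfl⟩
  by_contra hi
  have hsub : (convexHull ℝ (range p)).extremePoints ℝ ⊆ p '' {i}ᶜ := fun x hx => by
    obtain ⟨j, rfl⟩ := extremePoints_convexHull_subset hx
    exact mem_image_of_mem p fun hji : j = i => hi (hji ▸ hx)
  have hKM := closure_convexHull_extremePoints ((finite_range p).isCompact_convexHull (𝕜 := ℝ))
    (convex_convexHull ℝ _)
  have hpi : p i ∈ convexHull ℝ (p '' {i}ᶜ) :=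
    closure_minimal (convexHull_mono hsub) ((toFinite _).isCompact_convexHull (𝕜 := ℝ)).isClosed
      (hKM.ge (subset_convexHull ℝ _ (mem_range_self i)))
  exact hp _ i hpi rfl

theorem interior_convexHull_range_nonempty [Fintype ι] {V : Type*} [NormedAddCommGroup V]
    [NormedSpace ℝ V] (hV : Module.finrank ℝ V = 2) {q : ι → V} (hq : ConvexIndependent ℝ q)
    (hι : 2 < Fintype.card ι) : (interior (convexHull ℝ (range q))).Nonempty := by
  have : FiniteDimensional ℝ V := .of_finrank_pos (by omega)
  have : Nonempty ι := Fintype.card_pos_iff.1 (by omega)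
  have hcol := not_collinear_of_convexIndependent hq hι
  rw [collinear_iff_finrank_le_one, not_le] at hcol
  rw [interior_convexHull_nonempty_iff_affineSpan_eq_top,
    AffineSubspace.affineSpan_eq_top_iff_vectorSpan_eq_top_of_nonempty ℝ _ _ (range_nonempty q)]
  exact Submodule.eq_top_of_finrank_eq (le_antisymm (Submodule.finrank_le _) (by omega))

end ConvexIndependent

theorem IsIsometricCopy.volume_eq {t s : Set Plane} (ht : IsIsometricCopy t s) :
    MeasureTheory.volume t = MeasureTheory.volume s := by
  obtain ⟨g, rfl⟩ := ht
  rw [← EuclideanSpace.euclideanHausdorffMeasure_eq_volume]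
  exact g.isometry.euclideanHausdorffMeasure_image s

namespace ConvexPolygon

open MeasureTheory

variable {n : ℕ} [NeZero n] {T : Set (Set Plane)} {t : Set Plane}

theorem convexIndependent (P : ConvexPolygon n) : ConvexIndependent ℝ P.V :=
  convexIndependent_iff_notMem_convexHull_sdiff.2 fun i _ hi =>
    P.strictlyConvex i (convexHull_mono (Set.image_mono fun _ hj => hj.2) hi)

theorem isCompact_carrier (P : ConvexPolygon n) : IsCompact P.carrier :=
  (Set.finite_range P.V).isCompact_convexHull (𝕜 := ℝ)

theorem volumeReal_carrier_pos (P : ConvexPolygon n) (hn : 3 ≤ n) : 0 < volume.real P.carrier := by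
  have hne : (interior P.carrier).Nonempty :=
    interior_convexHull_range_nonempty (by simp) P.convexIndependent (by rwa [Fintype.card_fin])
  exact ENNReal.toReal_pos (Measure.measure_pos_of_nonempty_interior volume hne).ne'
    P.isCompact_carrier.measure_lt_top.ne

theorem exists_convexIndependent_of_isIsometricCopy (P : ConvexPolygon n)
    (ht : IsIsometricCopy t P.carrier) :
    ∃ p : Fin n → Plane, ConvexIndependent ℝ p ∧ convexHull ℝ (Set.range p) = t := by
  obtain ⟨g, rfl⟩ := ht
  let φ : Plane ≃ᵃ[ℝ] Plane := g.toRealAffineIsometryEquiv.toAffineEquiv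
  refine ⟨φ ∘ P.V, convexIndependent_affineEquiv_comp φ P.convexIndependent, ?_⟩
  rw [Set.range_comp]
  exact (AffineMap.image_convexHull (φ : Plane →ᵃ[ℝ] Plane) _).symm

theorem ncard_extremePoints_of_isIsometricCopy (P : ConvexPolygon n)
    (ht : IsIsometricCopy t P.carrier) : (t.extremePoints ℝ).ncard = n := by
  obtain ⟨p, hp, rfl⟩ := P.exists_convexIndependent_of_isIsometricCopy ht
  rw [extremePoints_convexHull_range hp, Set.ncard_range_of_injective hp.injective,
    Nat.card_eq_fintype_card, Fintype.card_fin]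

theorem isNormalTiling (P : ConvexPolygon n) (hn : 3 ≤ n) (hT : IsMonohedralTiling P.carrier T) :
    IsNormalTiling T (volume.real P.carrier) (Metric.diam P.carrier) where
  convex t ht := by
    obtain ⟨p, -, rfl⟩ := P.exists_convexIndependent_of_isIsometricCopy (hT.1 t ht)
    exact convex_convexHull ℝ _
  isCompact t ht := by
    obtain ⟨g, rfl⟩ := hT.1 t ht
    exact P.isCompact_carrier.image g.continuous
  finite_extremePoints t ht := by
    obtain ⟨p, -, rfl⟩ := P.exists_convexIndependent_of_isIsometricCopy (hT.1 t ht)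
    exact (Set.finite_range p).subset extremePoints_convexHull_subset
  pos := P.volumeReal_carrier_pos hn
  le_area t ht := by rw [measureReal_def, measureReal_def, (hT.1 t ht).volume_eq]
  diam_le t ht := by
    obtain ⟨g, rfl⟩ := hT.1 t ht
    exact (g.isometry.diam_image _).le
  pairwiseDisjoint t ht s hs hts := Set.disjoint_iff_inter_eq_empty.2 (hT.2.2 ht hs hts)
  sUnion_eq_univ := hT.2.1

end ConvexPolygon

theorem statement_19_general {T : Set (Set Plane)} {a D : ℝ} (hT : IsNormalTiling T a D) :
    ∃ t ∈ T, (t.extremePoints ℝ).ncard ≤ 6 := by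
  by_contra! hcard
  have ha := hT.pos
  have hD := hT.nonneg
  set C := 288 * Real.pi * D ^ 3 / a
  have hC : 0 ≤ C := by positivity
  have hle := hT.mul_radius_le hcard (R := D + 1 + C) (by positivity) (by linarith)
  have haC : a * C = 288 * Real.pi * D ^ 3 := mul_div_cancel₀ _ ha.ne'
  linarith [mul_nonneg ha.le hD]

/-- no convex polygon with at least seven vertices admits a
monohedral tiling of the Euclidean plane. -/
theorem statement_19 {n : ℕ} [NeZero n] (hn : 7 ≤ n) (P : ConvexPolygon n) :
    ¬ ∃ T : Set (Set Plane), IsMonohedralTiling P.carrier T := by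
  rintro ⟨T, hT⟩
  obtain ⟨t, ht, hcard⟩ := statement_19_general (P.isNormalTiling (by omega) hT)
  rw [P.ncard_extremePoints_of_isIsometricCopy (hT.1 t ht)] at hcard
  omega
end
end
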